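/- arXiv:1304.6671 — 6 statements merged into one kernel-verified Lean document; each statement's English description precedes it below -/
import Mathlib

section
/- Let m ≥ 1 and let u₁,…,u_m, v₁,…,v_m be real numbers with u_i > 0 and v_i > 0 for all i. For a real number c let L_c act on differentiable functions by (L_c g)(x) = x·g′(x) + c·g(x), and define the differential operator T(u,v)f = −x·(L_{2−v₁}∘⋯∘L_{2−v_m})f + (L_{1−u₁}∘⋯∘L_{1−u_m})f. Suppose f is smooth on an open neighborhood of (0,1], satisfies T(u,v)f(x) = 0 for all x ∈ (0,1], satisfies f^{(j)}(1) = 0 for 0 ≤ j ≤ m−1, and x ↦ xʲ f^{(j)}(x) is integrable on (0,1) for 0 ≤ j ≤ m. Then for every natural number n, ∫₀¹ xⁿ f(x) dx = (∏_{i=1}^m (u_i)_n/(v_i)_n) · ∫₀¹ f(x) dx. -/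
/-!
If `g` vanishes at `1` and `g` and `x g'` are integrable on `(0, 1)`, then integration by parts
gives `∫₀¹ xⁿ L_c g = (c - n - 1) ∫₀¹ xⁿ g`. The boundary term at `0` is the limit of `xⁿ⁺¹ g(x)`,
which exists because the derivative is integrable, and is zero because otherwise `1/x = O(xⁿ g)`
near `0`, and `1/x` is not integrable. Since `(d/dx)ʲ L_c = L_{c+j} (d/dx)ʲ`, the conditions on `f`
are inherited by `L_c f` with one order less, so the rule can be iterated. Applied to both sides of
`x (L_{2-v₁} ∘ ⋯ ∘ L_{2-vₘ}) f = (L_{1-u₁} ∘ ⋯ ∘ L_{1-uₘ}) f` it yields the recurrence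
`∏ᵢ (vᵢ + n) · ∫₀¹ xⁿ⁺¹ f = ∏ᵢ (uᵢ + n) · ∫₀¹ xⁿ f`.
-/

open MeasureTheory Polynomial

/-- The operator `L_c g (x) = x g'(x) + c g(x)`, i.e. `L_c = D + c` with `D = x d/dx`. -/
noncomputable def Lop (c : ℝ) (g : ℝ → ℝ) : ℝ → ℝ :=
  fun x => x * deriv g x + c * g x

/-- Iterated composition `L_{c₁} ∘ L_{c₂} ∘ ⋯ ∘ L_{cₘ}` applied to `g`. -/
noncomputable def iterLop (cs : List ℝ) (g : ℝ → ℝ) : ℝ → ℝ :=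
  cs.foldr Lop g

open Asymptotics Filter Set
open scoped Topology

section BoundaryTerm

variable {E : Type*} [NormedAddCommGroup E] [NormedSpace ℝ E]

lemma tendsto_nhdsGT_of_hasDerivAt_of_intervalIntegrable [CompleteSpace E] {F F' : ℝ → E}
    {a b : ℝ} (hab : a < b) (hderiv : ∀ x ∈ Ioc a b, HasDerivAt F (F' x) x)
    (hint : IntervalIntegrable F' volume a b) :
    Tendsto F (𝓝[>] a) (𝓝 (F b - ∫ x in a..b, F' x)) := by
  have hIoc : Ioc a b ∈ 𝓝[>] a := Ioc_mem_nhdsGT hab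
  have hprimitive : Tendsto (fun y ↦ ∫ x in b..y, F' x) (𝓝[>] a) (𝓝 (∫ x in b..a, F' x)) :=
    (intervalIntegral.continuousOn_primitive_interval' hint right_mem_uIcc a
      left_mem_uIcc).mono_left <| nhdsWithin_le_of_mem <|
        mem_of_superset hIoc (Ioc_subset_Icc_self.trans Icc_subset_uIcc)
  rw [sub_eq_add_neg, ← intervalIntegral.integral_symm]
  refine (hprimitive.const_add (F b)).congr' ?_
  filter_upwards [hIoc] with y hy
  have hsub : uIcc b y ⊆ Ioc a b := by
    rw [uIcc_of_ge hy.2]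
    exact fun z hz ↦ ⟨hy.1.trans_le hz.1, hz.2⟩
  rw [intervalIntegral.integral_eq_sub_of_hasDerivAt (fun x hx ↦ hderiv x (hsub hx))
    (hint.mono_set (hsub.trans (Ioc_subset_Icc_self.trans Icc_subset_uIcc))), add_sub_cancel]

lemma eq_zero_of_tendsto_smul_nhdsGT_zero {g : ℝ → E} {b : ℝ} {l : E} (hb : 0 < b)
    (hg : IntervalIntegrable g volume 0 b)
    (hlim : Tendsto (fun x ↦ x • g x) (𝓝[>] 0) (𝓝 l)) : l = 0 := by
  by_contra hl
  have hone : (fun _ ↦ (1 : ℝ)) =O[𝓝[>] 0] fun x ↦ x • g x :=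
    (isBigO_const_left_iff_pos_le_norm one_ne_zero).2 ⟨‖l‖ / 2, by positivity,
      hlim.norm.eventually_const_le (half_lt_self (norm_pos_iff.2 hl))⟩
  have hinv : (fun x : ℝ ↦ x⁻¹) =O[𝓝[>] 0] g := by
    refine ((isBigO_refl (fun x : ℝ ↦ x⁻¹) _).smul hone).congr' (by simp) ?_
    filter_upwards [self_mem_nhdsWithin] with x hx using inv_smul_smul₀ (ne_of_gt hx) (g x)
  refine not_integrableOn_of_tendsto_norm_atTop_of_deriv_isBigO_filter (f := Real.log) (𝓝[>] 0)
    (Ioc_mem_nhdsGT hb) ?_ (tendsto_abs_atBot_atTop.comp Real.tendsto_log_nhdsGT_zero)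
    (by simpa only [Real.deriv_log'] using hinv)
    ((intervalIntegrable_iff_integrableOn_Ioc_of_le hb.le).1 hg)
  filter_upwards [self_mem_nhdsWithin] with x hx using Real.differentiableAt_log (ne_of_gt hx)

end BoundaryTerm

section MomentsOfLop

variable {g : ℝ → ℝ} {b : ℝ}

lemma Lop_eq_Lop_add (c d : ℝ) (g : ℝ → ℝ) (x : ℝ) : Lop c g x = Lop d g x + (c - d) * g x := by
  simp only [Lop]
  ring

lemma Lop_pow_mul (c : ℝ) (n : ℕ) {x : ℝ} (hg : DifferentiableAt ℝ g x) :
    Lop c (fun y ↦ y ^ n * g y) x = x ^ n * Lop (c + n) g x := by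
  have hderiv := ((hasDerivAt_pow n x).fun_mul hg.hasDerivAt).deriv
  cases n with
  | zero => simp
  | succ n =>
    simp only [Lop, hderiv, Nat.add_sub_cancel]
    push_cast
    ring

lemma integral_Lop_one (hb : 0 < b) (hdiff : ∀ x ∈ Ioc 0 b, DifferentiableAt ℝ g x)
    (hg : IntervalIntegrable g volume 0 b) (hLg : IntervalIntegrable (Lop 1 g) volume 0 b) :
    ∫ x in 0..b, Lop 1 g x = b * g b := by
  have hderiv : ∀ x ∈ Ioc 0 b, HasDerivAt (fun y ↦ y * g y) (Lop 1 g x) x := fun x hx ↦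
    ((hasDerivAt_id' x).fun_mul (hdiff x hx).hasDerivAt).congr_deriv (add_comm _ _)
  have hlim := tendsto_nhdsGT_of_hasDerivAt_of_intervalIntegrable hb hderiv hLg
  exact (sub_eq_zero.1 (eq_zero_of_tendsto_smul_nhdsGT_zero hb hg hlim)).symm

lemma integral_pow_mul_Lop (c : ℝ) (n : ℕ) (hb : 0 < b)
    (hdiff : ∀ x ∈ Ioc 0 b, DifferentiableAt ℝ g x)
    (hg : IntervalIntegrable g volume 0 b) (hLg : IntervalIntegrable (Lop c g) volume 0 b) :
    ∫ x in 0..b, x ^ n * Lop c g x =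
      b ^ (n + 1) * g b + (c - n - 1) * ∫ x in 0..b, x ^ n * g x := by
  have hpow : ContinuousOn (fun x : ℝ ↦ x ^ n) (uIcc 0 b) := by fun_prop
  have hng := hg.continuousOn_mul hpow
  have hnLg := hLg.continuousOn_mul hpow
  have hLop : EqOn (Lop 1 fun y ↦ y ^ n * g y)
      (fun x ↦ x ^ n * Lop c g x - (c - n - 1) * (x ^ n * g x)) (uIoc 0 b) := fun x hx ↦ by
    rw [uIoc_of_le hb.le] at hx
    simp only [Lop_pow_mul 1 n (hdiff x hx), Lop_eq_Lop_add c (1 + n)]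
    ring
  have hparts := integral_Lop_one hb (g := fun y ↦ y ^ n * g y)
    (fun x hx ↦ (differentiableAt_pow n).fun_mul (hdiff x hx)) hng
    ((hnLg.sub (hng.const_mul _)).congr hLop.symm)
  rw [intervalIntegral.integral_congr_ae (ae_of_all _ fun _ hx ↦ hLop hx),
    intervalIntegral.integral_sub hnLg (hng.const_mul _),
    intervalIntegral.integral_const_mul] at hparts
  linear_combination hparts

end MomentsOfLop

lemma contDiffAt_Lop (c : ℝ) {f : ℝ → ℝ} {x : ℝ} {m : ℕ} (hf : ContDiffAt ℝ (m + 1) f x) :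
    ContDiffAt ℝ m (Lop c f) x :=
  (contDiffAt_id.mul (hf.derivWithin le_rfl)).add
    (contDiffAt_const.mul (hf.of_le le_self_add))

lemma deriv_Lop (c : ℝ) {f : ℝ → ℝ} {x : ℝ} (hf : DifferentiableAt ℝ f x)
    (hf' : DifferentiableAt ℝ (deriv f) x) : deriv (Lop c f) x = Lop (c + 1) (deriv f) x := by
  have hderiv : HasDerivAt (Lop c f) (1 * deriv f x + x * deriv (deriv f) x + c * deriv f x) x :=
    ((hasDerivAt_id' x).fun_mul hf'.hasDerivAt).fun_add (hf.hasDerivAt.const_mul c)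
  rw [hderiv.deriv, Lop]
  ring

lemma iteratedDeriv_Lop (j : ℕ) (c : ℝ) {f : ℝ → ℝ} {x : ℝ} (hf : ContDiffAt ℝ (j + 1) f x) :
    iteratedDeriv j (Lop c f) x = Lop (c + j) (iteratedDeriv j f) x := by
  induction j generalizing c f with
  | zero => simp
  | succ j ih =>
    have hderiv : deriv (Lop c f) =ᶠ[𝓝 x] Lop (c + 1) (deriv f) := by
      filter_upwards [hf.eventually (by simp)] with y hy
      exact deriv_Lop c (hy.differentiableAt (by simp))
        ((hy.derivWithin le_rfl).differentiableAt (by simp))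
    rw [iteratedDeriv_succ', hderiv.iteratedDeriv_eq, ih (c + 1) (hf.derivWithin le_rfl),
      iteratedDeriv_succ']
    push_cast
    ring_nf

/-- The class of functions to which `m` operators `L_c` can be applied and then integrated by parts
over `(0, b]` without boundary terms: `C^m` at every point of `(0, b]`, flat to order `m` at `b`,
and with `xʲ f⁽ʲ⁾` integrable on `(0, b)` for `j ≤ m`. -/
structure IsLopAdmissible (b : ℝ) (m : ℕ) (f : ℝ → ℝ) : Prop where
  contDiffAt : ∀ x ∈ Ioc 0 b, ContDiffAt ℝ m f x
  iteratedDeriv_eq_zero : ∀ j < m, iteratedDeriv j f b = 0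
  intervalIntegrable : ∀ j ≤ m,
    IntervalIntegrable (fun x ↦ x ^ j * iteratedDeriv j f x) volume 0 b

namespace IsLopAdmissible

variable {b : ℝ} {m : ℕ} {f : ℝ → ℝ}

lemma intervalIntegrable_self (hf : IsLopAdmissible b m f) : IntervalIntegrable f volume 0 b := by
  simpa using hf.intervalIntegrable 0 m.zero_le

lemma lop (hb : 0 < b) (hf : IsLopAdmissible b (m + 1) f) (c : ℝ) :
    IsLopAdmissible b m (Lop c f) := by
  have hcd : ∀ j ≤ m, ∀ x ∈ Ioc 0 b, ContDiffAt ℝ (j + 1) f x := fun j hj x hx ↦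
    (hf.contDiffAt x hx).of_le (by exact_mod_cast Nat.succ_le_succ hj)
  refine ⟨fun x hx ↦ contDiffAt_Lop c (hcd m le_rfl x hx), fun j hj ↦ ?_, fun j hj ↦ ?_⟩
  · rw [iteratedDeriv_Lop j c (hcd j hj.le b ⟨hb, le_rfl⟩), Lop, ← iteratedDeriv_succ,
      hf.iteratedDeriv_eq_zero (j + 1) (by lia), hf.iteratedDeriv_eq_zero j (by lia)]
    simp
  · refine ((hf.intervalIntegrable (j + 1) (by lia)).add
      ((hf.intervalIntegrable j (by lia)).const_mul (c + j))).congr fun x hx ↦ ?_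
    rw [uIoc_of_le hb.le] at hx
    simp only [iteratedDeriv_Lop j c (hcd j hj x hx), Lop, iteratedDeriv_succ]
    ring

protected lemma integral_pow_mul_Lop (hb : 0 < b) (hf : IsLopAdmissible b (m + 1) f) (c : ℝ)
    (n : ℕ) :
    ∫ x in 0..b, x ^ n * Lop c f x = (c - n - 1) * ∫ x in 0..b, x ^ n * f x := by
  have hfb : f b = 0 := by simpa using hf.iteratedDeriv_eq_zero 0 m.succ_pos
  rw [integral_pow_mul_Lop c n hb
    (fun x hx ↦ (hf.contDiffAt x hx).differentiableAt (by simp))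
    hf.intervalIntegrable_self (hf.lop hb c).intervalIntegrable_self, hfb]
  ring

lemma integral_pow_mul_iterLop (hb : 0 < b) (cs : List ℝ)
    (hf : IsLopAdmissible b cs.length f) (n : ℕ) :
    ∫ x in 0..b, x ^ n * iterLop cs f x =
      (cs.map fun c : ℝ ↦ c - n - 1).prod * ∫ x in 0..b, x ^ n * f x := by
  -- The innermost operator is split off, so that the induction moves from `f` to `L_c f`.
  induction cs using List.reverseRecOn generalizing f with
  | nil => simp [iterLop]
  | append_singleton cs c ih =>
    rw [List.length_append, List.length_singleton] at hf
    have hiter : iterLop (cs ++ [c]) f = iterLop cs (Lop c f) := List.foldr_append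
    rw [hiter, ih (hf.lop hb c), hf.integral_pow_mul_Lop hb c n, List.map_append, List.prod_append,
      List.map_singleton, List.prod_singleton, mul_assoc]

lemma integral_pow_mul_iterLop_ofFn (hb : 0 < b) (hf : IsLopAdmissible b m f) (c : Fin m → ℝ)
    (n : ℕ) :
    ∫ x in 0..b, x ^ n * iterLop (List.ofFn c) f x =
      (∏ i, (c i - n - 1)) * ∫ x in 0..b, x ^ n * f x := by
  rw [integral_pow_mul_iterLop hb _ (by rwa [List.length_ofFn]), List.map_ofFn, List.prod_ofFn]
  rfl

lemma prod_add_mul_integral_pow_succ_mul (hb : 0 < b) (hf : IsLopAdmissible b m f)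
    (u v : Fin m → ℝ)
    (hT : ∀ x ∈ Ioc 0 b, -x * iterLop (List.ofFn fun i ↦ 2 - v i) f x +
      iterLop (List.ofFn fun i ↦ 1 - u i) f x = 0) (n : ℕ) :
    (∏ i, (v i + n)) * ∫ x in 0..b, x ^ (n + 1) * f x =
      (∏ i, (u i + n)) * ∫ x in 0..b, x ^ n * f x := by
  have hcongr : ∫ x in 0..b, x ^ (n + 1) * iterLop (List.ofFn fun i ↦ 2 - v i) f x =
      ∫ x in 0..b, x ^ n * iterLop (List.ofFn fun i ↦ 1 - u i) f x :=
    intervalIntegral.integral_congr_ae <| ae_of_all _ fun x hx ↦ by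
      rw [uIoc_of_le hb.le] at hx
      linear_combination (-x ^ n) * hT x hx
  have hv : ∀ i, 2 - v i - (n + 1 : ℕ) - 1 = -(v i + n) := fun i ↦ by push_cast; ring
  have hu : ∀ i, 1 - u i - n - 1 = -(u i + n) := fun i ↦ by ring
  simp only [hf.integral_pow_mul_iterLop_ofFn hb, hv, hu, Finset.prod_neg, mul_assoc] at hcongr
  exact mul_left_cancel₀ (pow_ne_zero _ (neg_ne_zero.2 one_ne_zero)) hcongr

end IsLopAdmissible

theorem moments_of_differential_system_general {m : ℕ} (u v : Fin m → ℝ) {f : ℝ → ℝ}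
    (hf : ∀ x ∈ Ioc (0 : ℝ) 1, ContDiffAt ℝ m f x)
    (hT : ∀ x ∈ Ioc (0 : ℝ) 1, -x * iterLop (List.ofFn fun i ↦ 2 - v i) f x +
      iterLop (List.ofFn fun i ↦ 1 - u i) f x = 0)
    (hvanish : ∀ j < m, iteratedDeriv j f 1 = 0)
    (hint : ∀ j ≤ m, IntegrableOn (fun x ↦ x ^ j * iteratedDeriv j f x) (Ioo 0 1)) (n : ℕ) :
    (∏ i, (ascPochhammer ℝ n).eval (v i)) * ∫ x in (0 : ℝ)..1, x ^ n * f x =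
      (∏ i, (ascPochhammer ℝ n).eval (u i)) * ∫ x in (0 : ℝ)..1, f x := by
  have hadm : IsLopAdmissible 1 m f := ⟨hf, hvanish, fun j hj ↦
    (intervalIntegrable_iff_integrableOn_Ioo_of_le zero_le_one).2 (hint j hj)⟩
  induction n with
  | zero => simp
  | succ n ih =>
    have hrec := hadm.prod_add_mul_integral_pow_succ_mul one_pos u v hT n
    simp only [ascPochhammer_succ_eval, Finset.prod_mul_distrib]
    linear_combination (∏ i, (ascPochhammer ℝ n).eval (v i)) * hrec + (∏ i, (u i + n)) * ih

/-- If `f` solves the differential system `T(u,v) f = 0` on `(0,1]` with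
    `f⁽ʲ⁾(1) = 0` for `0 ≤ j ≤ m-1`, then its moments satisfy
    `∫₀¹ xⁿ f = ∏ᵢ (uᵢ)ₙ/(vᵢ)ₙ ∫₀¹ f`. -/
theorem moments_of_differential_system (m : ℕ) (hm : 1 ≤ m)
    (u v : Fin m → ℝ) (hu : ∀ i, 0 < u i) (hv : ∀ i, 0 < v i)
    (f : ℝ → ℝ) (U : Set ℝ) (hU : IsOpen U) (hUsub : Set.Ioc (0:ℝ) 1 ⊆ U)
    (hf : ContDiffOn ℝ (⊤ : ℕ∞) f U)
    (hT : ∀ x ∈ Set.Ioc (0:ℝ) 1,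
      -x * iterLop (List.ofFn fun i => 2 - v i) f x +
        iterLop (List.ofFn fun i => 1 - u i) f x = 0)
    (hvanish : ∀ j, j + 1 ≤ m → iteratedDeriv j f 1 = 0)
    (hint : ∀ j ≤ m, IntegrableOn (fun x => x ^ j * iteratedDeriv j f x)
      (Set.Ioo (0:ℝ) 1)) :
    ∀ n : ℕ, ∫ x in (0:ℝ)..1, x ^ n * f x =
      (∏ i, (ascPochhammer ℝ n).eval (u i) / (ascPochhammer ℝ n).eval (v i)) *
        ∫ x in (0:ℝ)..1, f x := by
  intro n
  have hne : ∏ i, (ascPochhammer ℝ n).eval (v i) ≠ 0 :=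
    Finset.prod_ne_zero_iff.2 fun i _ ↦ (ascPochhammer_pos n (v i) (hv i)).ne'
  rw [Finset.prod_div_distrib, div_mul_eq_mul_div, eq_div_iff hne, mul_comm]
  exact moments_of_differential_system_general u v
    (fun x hx ↦ (hf.contDiffAt (hU.mem_nhds (hUsub hx))).of_le (by exact_mod_cast le_top))
    hT hvanish hint n
end

section
/- Let m ≥ 1, let u₁,…,u_m be real numbers, let f be a smooth function on an open interval I ⊆ (0,∞), and let L_c g(x) = x·g′(x) + c·g(x). Then for all x ∈ I, (L_{1−u₁}∘⋯∘L_{1−u_m} f)(x) = Σ_{j=0}^m a_j xʲ f^{(j)}(x), where a_j = Σ_{i=j}^m S(i,j) e_{m−i}(1−u₁,…,1−u_m), S(i,j) are Stirling numbers of the second kind, and e_k denotes the elementary symmetric polynomial of degree k in m variables. -/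
/-- Stirling numbers of the second kind, via the recurrence
    `S(k+1, i+1) = S(k, i) + (i+1) S(k, i+1)`, `S(0,0) = 1`. -/
def stirling2 : ℕ → ℕ → ℕ
  | 0, 0 => 1
  | 0, _ + 1 => 0
  | _ + 1, 0 => 0
  | k + 1, i + 1 => stirling2 k i + (i + 1) * stirling2 k (i + 1)

/-- The elementary symmetric polynomial of degree `k` in the variables
    `z₁, …, z_m`. -/
def esym {m : ℕ} (k : ℕ) (z : Fin m → ℝ) : ℝ :=
  ∑ s ∈ Finset.powersetCard k (Finset.univ : Finset (Fin m)), ∏ i ∈ s, z i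

/-!
Write `D g (x) = x g'(x)`. Constants commute with `D`, so `L_{c₁} ∘ ⋯ ∘ L_{cₘ}` is the polynomial
`∏ (X + cᵢ)` evaluated at `D`, and by Vieta its coefficient at `Xⁱ` is `e_{m-i}(c)`. The
monomial operators `Mⱼ f (x) = xʲ f⁽ʲ⁾(x)` satisfy `D Mⱼ = j Mⱼ + Mⱼ₊₁`, which is the Stirling
recurrence, so `Dⁱ = ∑ⱼ S(i,j) Mⱼ`. Substituting and exchanging the two sums gives the formula.
-/

open Polynomial Finset Topology

theorem stirling2_eq_stirlingSecond (n k : ℕ) : stirling2 n k = n.stirlingSecond k := by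
  induction n generalizing k with
  | zero => cases k <;> rfl
  | succ n ih =>
    cases k with
    | zero => rfl
    | succ k => rw [stirling2, Nat.stirlingSecond_succ_succ, ih, ih, add_comm]

theorem sum_stirlingSecond_succ_nsmul {M : Type*} [AddCommMonoid M] (v : ℕ → M) (n : ℕ) :
    ∑ k ∈ range (n + 2), (n + 1).stirlingSecond k • v k =
      ∑ k ∈ range (n + 1), n.stirlingSecond k • (k • v k + v (k + 1)) := by
  have shift : ∑ k ∈ range (n + 1), (k + 1) • n.stirlingSecond (k + 1) • v (k + 1) =
      ∑ k ∈ range (n + 1), k • n.stirlingSecond k • v k := by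
    have h := sum_range_succ' (fun k => k • n.stirlingSecond k • v k) (n + 1)
    rw [sum_range_succ, Nat.stirlingSecond_eq_zero_of_lt n.lt_succ_self] at h
    simpa only [zero_smul, smul_zero, add_zero] using h.symm
  calc ∑ k ∈ range (n + 2), (n + 1).stirlingSecond k • v k
      = ∑ k ∈ range (n + 1), (n + 1).stirlingSecond (k + 1) • v (k + 1) := by
        rw [sum_range_succ', Nat.stirlingSecond_succ_zero, zero_smul, add_zero]
    _ = ∑ k ∈ range (n + 1), (k + 1) • n.stirlingSecond (k + 1) • v (k + 1) +
          ∑ k ∈ range (n + 1), n.stirlingSecond k • v (k + 1) := by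
        simp only [Nat.stirlingSecond_succ_succ, add_smul, mul_smul, sum_add_distrib]
    _ = ∑ k ∈ range (n + 1), n.stirlingSecond k • (k • v k + v (k + 1)) := by
        rw [shift, ← sum_add_distrib]
        exact sum_congr rfl fun k _ => by rw [smul_add, smul_comm]

theorem sum_coeff_X_add_C_mul_smul {R M : Type*} [Semiring R] [AddCommMonoid M] [Module R M]
    {p : R[X]} {n : ℕ} (hp : p.natDegree ≤ n) (c : R) (v : ℕ → M) :
    ∑ i ∈ range (n + 2), ((X + C c) * p).coeff i • v i =
      ∑ i ∈ range (n + 1), p.coeff i • v (i + 1) + c • ∑ i ∈ range (n + 1), p.coeff i • v i := by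
  have coeff_top : p.coeff (n + 1) = 0 := coeff_eq_zero_of_natDegree_lt (Nat.lt_succ_of_le hp)
  have sum_X : ∑ i ∈ range (n + 2), (X * p).coeff i • v i =
      ∑ i ∈ range (n + 1), p.coeff i • v (i + 1) := by
    simp only [sum_range_succ' _ (n + 1), coeff_X_mul, coeff_X_mul_zero, zero_smul, add_zero]
  have sum_C : ∑ i ∈ range (n + 2), (C c * p).coeff i • v i =
      c • ∑ i ∈ range (n + 1), p.coeff i • v i := by
    simp only [sum_range_succ _ (n + 1), coeff_C_mul, mul_smul, coeff_top, zero_smul, smul_zero,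
      add_zero, smul_sum]
  simp only [add_mul, coeff_add, add_smul, sum_add_distrib, sum_X, sum_C]

theorem natDegree_prod_map_X_add_C_le {R : Type*} [Semiring R] (cs : List R) :
    (cs.map fun c => X + C c).prod.natDegree ≤ cs.length := by
  refine (natDegree_list_prod_le _).trans ?_
  refine (List.sum_le_card_nsmul _ 1 ?_).trans_eq (by simp)
  simp only [List.map_map, List.mem_map, Function.comp_apply]
  rintro _ ⟨c, -, rfl⟩
  exact natDegree_add_C.trans_le natDegree_X_le

theorem coeff_prod_X_add_C_ofFn {m : ℕ} (z : Fin m → ℝ) {i : ℕ} (hi : i ≤ m) :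
    ((List.ofFn z).map fun c => X + C c).prod.coeff i = esym (m - i) z := by
  rw [List.map_ofFn, List.prod_ofFn]
  simpa [esym] using Finset.prod_X_add_C_coeff univ z (k := i) (by simpa using hi)

section EulerOperator

variable {𝕜 F : Type*} [NontriviallyNormedField 𝕜] [NormedAddCommGroup F] [NormedSpace 𝕜 F]
  {f g : 𝕜 → F} {x : 𝕜}

/-- The Euler operator `D g (x) = x g'(x)`, which is `L_0`, for functions with values in any
normed space. -/
noncomputable def eulerOp (g : 𝕜 → F) : 𝕜 → F :=
  fun x => x • deriv g x

theorem eulerOp_congr_of_eventuallyEq (h : f =ᶠ[𝓝 x] g) : eulerOp f x = eulerOp g x :=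
  congrArg (x • ·) h.deriv_eq

theorem eulerOp_sum_smul {R ι : Type*} [Semiring R] [Module R F] [SMulCommClass 𝕜 R F]
    [ContinuousConstSMul R F] (s : Finset ι) (c : ι → R) {G : ι → 𝕜 → F}
    (hG : ∀ i ∈ s, DifferentiableAt 𝕜 (G i) x) :
    eulerOp (fun y => ∑ i ∈ s, c i • G i y) x = ∑ i ∈ s, c i • eulerOp (G i) x := by
  have hderiv : HasDerivAt (fun y => ∑ i ∈ s, c i • G i y) (∑ i ∈ s, c i • deriv (G i) x) x :=
    HasDerivAt.fun_sum fun i hi => (hG i hi).hasDerivAt.const_smul (c i)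
  simp only [eulerOp, hderiv.deriv, smul_sum, smul_comm]

theorem contDiffAt_eulerOp_iterate {i n : ℕ} (h : ContDiffAt 𝕜 (n + i : ℕ) f x) :
    ContDiffAt 𝕜 n (eulerOp^[i] f) x := by
  induction i generalizing n with
  | zero => exact h
  | succ i ih =>
    rw [Function.iterate_succ_apply']
    have hi : ContDiffAt 𝕜 (n + 1 : ℕ) (eulerOp^[i] f) x := ih (by convert h using 2; omega)
    exact contDiffAt_id.smul (hi.derivWithin (by norm_cast))

theorem differentiableAt_iteratedDeriv {j : ℕ} (h : ContDiffAt 𝕜 (j + 1 : ℕ) f x) :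
    DifferentiableAt 𝕜 (iteratedDeriv j f) x := by
  rw [iteratedDeriv_eq_equiv_comp, LinearIsometryEquiv.comp_differentiableAt_iff]
  exact h.differentiableAt_iteratedFDeriv (by exact_mod_cast j.lt_succ_self)

theorem eulerOp_pow_smul_iteratedDeriv {j : ℕ} (h : ContDiffAt 𝕜 (j + 1 : ℕ) f x) :
    eulerOp (fun y => y ^ j • iteratedDeriv j f y) x =
      j • x ^ j • iteratedDeriv j f x + x ^ (j + 1) • iteratedDeriv (j + 1) f x := by
  have hderiv := (hasDerivAt_pow j x).fun_smul (differentiableAt_iteratedDeriv h).hasDerivAt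
  have x_mul_deriv_pow : x * (j * x ^ (j - 1)) = j * x ^ j := by
    cases j with
    | zero => simp
    | succ j => rw [Nat.add_sub_cancel]; ring
  rw [eulerOp, hderiv.deriv, ← iteratedDeriv_succ, smul_add, smul_smul, smul_smul, x_mul_deriv_pow,
    ← pow_succ', mul_smul, Nat.cast_smul_eq_nsmul, add_comm]

theorem eulerOp_iterate_apply {i : ℕ} (h : ContDiffAt 𝕜 i f x) :
    eulerOp^[i] f x =
      ∑ j ∈ range (i + 1), i.stirlingSecond j • x ^ j • iteratedDeriv j f x := by
  induction i generalizing x with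
  | zero => simp
  | succ i ih =>
    have contDiffAt_of_lt {j : ℕ} (hj : j ∈ range (i + 1)) : ContDiffAt 𝕜 (j + 1 : ℕ) f x :=
      h.of_le (by exact_mod_cast mem_range.mp hj)
    have expand_near : eulerOp^[i] f =ᶠ[𝓝 x] fun y =>
        ∑ j ∈ range (i + 1), i.stirlingSecond j • y ^ j • iteratedDeriv j f y := by
      filter_upwards [h.eventually (by simp)] with y hy
      exact ih (hy.of_le (by exact_mod_cast i.le_succ))
    rw [Function.iterate_succ_apply', eulerOp_congr_of_eventuallyEq expand_near,
      eulerOp_sum_smul _ _ fun j hj =>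
        (differentiableAt_pow j).fun_smul (differentiableAt_iteratedDeriv (contDiffAt_of_lt hj)),
      sum_stirlingSecond_succ_nsmul]
    exact sum_congr rfl fun j hj =>
      congrArg _ (eulerOp_pow_smul_iteratedDeriv (contDiffAt_of_lt hj))

end EulerOperator

theorem iterLop_eq_sum_coeff_mul_eulerOp_iterate {f : ℝ → ℝ} {x : ℝ} (cs : List ℝ)
    (hf : ContDiffAt ℝ cs.length f x) :
    iterLop cs f x = ∑ i ∈ range (cs.length + 1),
      (cs.map fun c => X + C c).prod.coeff i * eulerOp^[i] f x := by
  induction cs generalizing x with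
  | nil => simp [iterLop]
  | cons c cs ih =>
    rw [List.length_cons] at hf ⊢
    set p : ℝ[X] := (cs.map fun c => X + C c).prod with hp
    have expand_near : iterLop cs f =ᶠ[𝓝 x] fun y =>
        ∑ i ∈ range (cs.length + 1), p.coeff i • eulerOp^[i] f y := by
      filter_upwards [hf.eventually (by simp)] with y hy
      exact ih (hy.of_le (by exact_mod_cast cs.length.le_succ))
    have differentiableAt_iterate : ∀ i ∈ range (cs.length + 1),
        DifferentiableAt ℝ (eulerOp^[i] f) x := fun i hi =>
      (contDiffAt_eulerOp_iterate (n := 1) (hf.of_le (by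
        have := mem_range.mp hi
        exact_mod_cast (by omega : 1 + i ≤ cs.length + 1)))).differentiableAt (by simp)
    calc iterLop (c :: cs) f x
        = eulerOp (iterLop cs f) x + c • iterLop cs f x := rfl
      _ = ∑ i ∈ range (cs.length + 1), p.coeff i • eulerOp^[i + 1] f x +
            c • ∑ i ∈ range (cs.length + 1), p.coeff i • eulerOp^[i] f x := by
          rw [eulerOp_congr_of_eventuallyEq expand_near,
            eulerOp_sum_smul _ _ differentiableAt_iterate, expand_near.eq_of_nhds]
          simp only [Function.iterate_succ_apply']
      _ = ∑ i ∈ range (cs.length + 2), ((X + C c) * p).coeff i • eulerOp^[i] f x :=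
          (sum_coeff_X_add_C_mul_smul (natDegree_prod_map_X_add_C_le cs) c
            fun i => eulerOp^[i] f x).symm
      _ = _ := by simp only [List.map_cons, List.prod_cons, hp, smul_eq_mul]

theorem iterLop_eq_sum_general (m : ℕ) (z : Fin m → ℝ) {f : ℝ → ℝ} {x : ℝ}
    (hf : ContDiffAt ℝ m f x) :
    iterLop (List.ofFn z) f x =
      ∑ j ∈ range (m + 1),
        (∑ i ∈ Icc j m, (stirling2 i j : ℝ) * esym (m - i) z) * x ^ j * iteratedDeriv j f x := by
  have expand_eulerOp {i : ℕ} (hi : i ≤ m) : eulerOp^[i] f x =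
      ∑ j ∈ range (i + 1), (stirling2 i j : ℝ) * (x ^ j * iteratedDeriv j f x) := by
    simp only [eulerOp_iterate_apply (hf.of_le (by exact_mod_cast hi)),
      stirling2_eq_stirlingSecond, nsmul_eq_mul, smul_eq_mul]
  calc iterLop (List.ofFn z) f x
      = ∑ i ∈ range (m + 1),
          ((List.ofFn z).map fun c => X + C c).prod.coeff i * eulerOp^[i] f x := by
        simpa only [List.length_ofFn] using iterLop_eq_sum_coeff_mul_eulerOp_iterate
          (List.ofFn z) (by simpa only [List.length_ofFn] using hf)
    _ = ∑ i ∈ range (m + 1), ∑ j ∈ range (i + 1),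
          (stirling2 i j : ℝ) * esym (m - i) z * x ^ j * iteratedDeriv j f x := by
        refine sum_congr rfl fun i hi => ?_
        have hi : i ≤ m := mem_range_succ_iff.mp hi
        rw [coeff_prod_X_add_C_ofFn z hi, expand_eulerOp hi, mul_sum]
        exact sum_congr rfl fun j _ => by ring
    _ = ∑ j ∈ range (m + 1), ∑ i ∈ Icc j m,
          (stirling2 i j : ℝ) * esym (m - i) z * x ^ j * iteratedDeriv j f x :=
        sum_comm' fun i j => by simp only [mem_range, mem_Icc]; omega
    _ = _ := by simp only [sum_mul]

/-- For `f` smooth on an open interval `I ⊆ (0,∞)`,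
    `(L_{1-u₁} ∘ ⋯ ∘ L_{1-uₘ} f)(x) = Σ_{j=0}^m a_j xʲ f⁽ʲ⁾(x)` where
    `a_j = Σ_{i=j}^m S(i,j) e_{m-i}(1-u₁, …, 1-uₘ)`. -/
theorem iterLop_eq_sum (m : ℕ) (hm : 1 ≤ m) (u : Fin m → ℝ)
    (a b : ℝ) (ha : 0 ≤ a)
    (f : ℝ → ℝ) (hf : ContDiffOn ℝ (⊤ : ℕ∞) f (Set.Ioo a b)) :
    ∀ x ∈ Set.Ioo a b,
      iterLop (List.ofFn fun i => 1 - u i) f x =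
        ∑ j ∈ Finset.range (m + 1),
          (∑ i ∈ Finset.Icc j m, (stirling2 i j : ℝ) * esym (m - i) (fun t => 1 - u t)) *
            x ^ j * iteratedDeriv j f x := by
  intro x hx
  exact iterLop_eq_sum_general m _
    ((hf.contDiffAt (isOpen_Ioo.mem_nhds hx)).of_le (by exact_mod_cast le_top))
end

section
/- Let m ≥ 1 and let u₁,…,u_m, v₁,…,v_m be real numbers. Define p(γ) = ∏_{i=1}^m (γ+1−u_i) and q(γ) = ∏_{i=1}^m (γ+2−v_i), and let a₀,…,a_m and b₀,…,b_m be the unique real numbers such that p(γ) = Σ_{j=0}^m (−1)ʲ a_j (−γ)_j and q(γ) = Σ_{j=0}^m (−1)ʲ b_j (−γ)_j for all real γ. Set q₁(γ) = (1+γ)q(γ) − γ·q(γ−1), and let ∇ be the backward difference operator ∇g(γ) = g(γ) − g(γ−1). Then for every 0 ≤ k ≤ m−1 and every real γ, Σ_{j=k}^m [C(j, j−k)·a_j − C(j+1, j−k)·b_j] · (−1)^{j−k} (k−γ)_{j−k} = (1/k!)·(∇^k p)(γ) − (1/(k+1)!)·(∇^k q₁)(γ), where C(n,r) denotes the binomial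 coefficient. -/
open Polynomial

/-- The backward difference operator `∇ g (γ) = g(γ) - g(γ-1)`. -/
def nabla (g : ℝ → ℝ) : ℝ → ℝ := fun c => g c - g (c - 1)

/-!
Writing `(x)_j↓` for the falling factorial, `(-1)ʲ (-γ)_j = (γ)_j↓`, so `aⱼ` and `bⱼ` are Newton
coefficients. The `p` part follows from `Δᵏ (x)_j↓ / k! = C(j, k) (x)_{j-k}↓` and
`∇ᵏ p(γ) = Δᵏ p(γ - k)`. For the `q` part, `x q(x - 1)` has the Newton expansion
`∑ⱼ bⱼ (x)_{j+1}↓`, and its forward difference is `q₁`. Hence `Δᵏ q₁` is a `(k+1)`-st difference of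
a Newton expansion with indices raised by one, which accounts for `C(j+1, j-k)` and `1/(k+1)!`.
-/

open fwdDiff

theorem neg_one_pow_mul_ascPochhammer_eval_neg {R : Type*} [Ring R] (n : ℕ) (x : R) :
    (-1) ^ n * (ascPochhammer R n).eval (-x) = (descPochhammer R n).eval x := by
  rw [ascPochhammer_eval_neg_eq_descPochhammer, ← mul_assoc, ← pow_add,
    (Even.add_self n).neg_one_pow, one_mul]

section CommRing

variable {R : Type*} [CommRing R]

theorem descPochhammer_succ_eval_left (n : ℕ) (x : R) :
    (descPochhammer R (n + 1)).eval x = x * (descPochhammer R n).eval (x - 1) := by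
  simp [descPochhammer_succ_left]

theorem fwdDiff_descPochhammer_eval (n : ℕ) :
    Δ_[1] (descPochhammer R n).eval = (n : R) • (descPochhammer R (n - 1)).eval := by
  funext x
  cases n with
  | zero => simp [fwdDiff]
  | succ n =>
    have h_left : (descPochhammer R (n + 1)).eval (x + 1) =
        (x + 1) * (descPochhammer R n).eval x := by
      rw [descPochhammer_succ_eval_left, add_sub_cancel_right]
    simp only [fwdDiff, h_left, descPochhammer_succ_eval, Pi.smul_apply, smul_eq_mul,
      Nat.add_sub_cancel, Nat.cast_succ]
    ring

theorem fwdDiff_iter_descPochhammer_eval (n k : ℕ) :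
    (Δ_[1])^[k] (descPochhammer R n).eval =
      (n.descFactorial k : R) • (descPochhammer R (n - k)).eval := by
  induction k with
  | zero => simp
  | succ k ih =>
    rw [Function.iterate_succ_apply', ih, fwdDiff_const_smul, fwdDiff_descPochhammer_eval,
      smul_smul, Nat.sub_sub, Nat.descFactorial_succ, Nat.cast_mul, mul_comm]

theorem fwdDiff_iter_sum_mul_descPochhammer_eval {ι : Type*} (s : Finset ι) (c : ι → R)
    (n : ι → ℕ) (k : ℕ) (x : R) :
    (Δ_[1])^[k] (fun y ↦ ∑ i ∈ s, c i * (descPochhammer R (n i)).eval y) x =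
      ∑ i ∈ s, c i * ((n i).descFactorial k * (descPochhammer R (n i - k)).eval x) := by
  have h_sum : (fun y ↦ ∑ i ∈ s, c i * (descPochhammer R (n i)).eval y) =
      ∑ i ∈ s, c i • (descPochhammer R (n i)).eval := by
    funext y
    simp
  simp [h_sum, fwdDiff_iter_descPochhammer_eval]

theorem fwdDiff_sum_mul_descPochhammer_succ_eval {s : Finset ℕ} {c : ℕ → R} {q : R → R}
    (hq : ∀ x, q x = ∑ j ∈ s, c j * (descPochhammer R j).eval x) :
    Δ_[1] (fun y ↦ ∑ j ∈ s, c j * (descPochhammer R (j + 1)).eval y) =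
      fun x ↦ (1 + x) * q x - x * q (x - 1) := by
  have h_shift (y : R) :
      ∑ j ∈ s, c j * (descPochhammer R (j + 1)).eval y = y * q (y - 1) := by
    simp only [hq, Finset.mul_sum, descPochhammer_succ_eval_left, mul_left_comm]
  funext x
  rw [fwdDiff, h_shift, h_shift, add_sub_cancel_right, add_comm x 1]

end CommRing

section Field

variable {K : Type*} [Field K] [CharZero K]

theorem one_div_factorial_mul_fwdDiff_iter_sum_descPochhammer_eval (m d k : ℕ) (c : ℕ → K)
    (x : K) :
    1 / ((k + d).factorial : K) * (Δ_[1])^[k + d]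
        (fun y ↦ ∑ j ∈ Finset.range (m + 1), c j * (descPochhammer K (j + d)).eval y) x =
      ∑ j ∈ Finset.Icc k m,
        ((j + d).choose (j - k) : K) * c j * (descPochhammer K (j - k)).eval x := by
  have h_factorial : ((k + d).factorial : K) ≠ 0 := mod_cast (k + d).factorial_ne_zero
  rw [fwdDiff_iter_sum_mul_descPochhammer_eval, Finset.mul_sum]
  symm
  apply Finset.sum_subset_zero_on_sdiff
  · intro j hj
    simp only [Finset.mem_Icc, Finset.mem_range] at hj ⊢
    lia
  · intro j hj
    have hjk : j + d < k + d := by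
      simp only [Finset.mem_sdiff, Finset.mem_Icc, Finset.mem_range] at hj
      lia
    simp [Nat.descFactorial_of_lt hjk]
  · intro j hj
    have h_choose : (j + d).choose (j - k) = (j + d).choose (k + d) :=
      Nat.choose_symm_of_eq_add (by have := (Finset.mem_Icc.mp hj).1; lia)
    rw [h_choose, Nat.descFactorial_eq_factorial_mul_choose, Nat.add_sub_add_right]
    push_cast
    field_simp

theorem R_prime_eq_general (m : ℕ) (a b : ℕ → K) (p q : K → K)
    (ha : ∀ γ, p γ = ∑ j ∈ Finset.range (m + 1),
      (-1) ^ j * a j * (ascPochhammer K j).eval (-γ))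
    (hb : ∀ γ, q γ = ∑ j ∈ Finset.range (m + 1),
      (-1) ^ j * b j * (ascPochhammer K j).eval (-γ))
    (k : ℕ) (γ : K) :
    ∑ j ∈ Finset.Icc k m,
        ((j.choose (j - k) : K) * a j - ((j + 1).choose (j - k) : K) * b j) *
          (-1) ^ (j - k) * (ascPochhammer K (j - k)).eval ((k : K) - γ) =
      (1 / (k.factorial : K)) * (Δ_[1])^[k] p (γ - k) -
        (1 / ((k + 1).factorial : K)) *
          (Δ_[1])^[k] (fun γ ↦ (1 + γ) * q γ - γ * q (γ - 1)) (γ - k) := by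
  have h_newton_p (x : K) :
      p x = ∑ j ∈ Finset.range (m + 1), a j * (descPochhammer K j).eval x := by
    simp only [ha, ← neg_one_pow_mul_ascPochhammer_eval_neg, mul_left_comm, mul_assoc]
  have h_newton_q (x : K) :
      q x = ∑ j ∈ Finset.range (m + 1), b j * (descPochhammer K j).eval x := by
    simp only [hb, ← neg_one_pow_mul_ascPochhammer_eval_neg, mul_left_comm, mul_assoc]
  have h_p := one_div_factorial_mul_fwdDiff_iter_sum_descPochhammer_eval m 0 k a (γ - k)
  have h_q := one_div_factorial_mul_fwdDiff_iter_sum_descPochhammer_eval m 1 k b (γ - k)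
  simp only [add_zero, ← h_newton_p] at h_p
  rw [Function.iterate_succ_apply, fwdDiff_sum_mul_descPochhammer_succ_eval h_newton_q] at h_q
  rw [h_p, h_q, ← Finset.sum_sub_distrib]
  refine Finset.sum_congr rfl fun j _ ↦ ?_
  rw [mul_assoc, ← neg_sub γ, neg_one_pow_mul_ascPochhammer_eval_neg]
  ring

end Field

theorem nabla_iterate_apply (g : ℝ → ℝ) (k : ℕ) (γ : ℝ) :
    nabla^[k] g γ = (Δ_[1])^[k] g (γ - k) := by
  induction k generalizing γ with
  | zero => simp
  | succ k ih =>
    have h_shift : γ - (k + 1) + 1 = γ - k := by ring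
    have h_pred : γ - 1 - k = γ - (k + 1) := by ring
    simp only [Function.iterate_succ_apply', nabla, fwdDiff, ih, Nat.cast_succ, h_shift, h_pred]

/-- With `p(γ) = ∏ (γ+1-uᵢ)`, `q(γ) = ∏ (γ+2-vᵢ)` expanded as
    `p(γ) = Σⱼ (−1)ʲ aⱼ (−γ)ⱼ`, `q(γ) = Σⱼ (−1)ʲ bⱼ (−γ)ⱼ`, and
    `q₁(γ) = (1+γ)q(γ) − γ q(γ−1)`, for `0 ≤ k ≤ m−1`:
    `Σ_{j=k}^m [C(j,j−k) aⱼ − C(j+1,j−k) bⱼ] (−1)^{j−k} (k−γ)_{j−k}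
      = (1/k!) ∇ᵏp(γ) − (1/(k+1)!) ∇ᵏq₁(γ)`. -/
theorem R_prime_eq (m : ℕ) (hm : 1 ≤ m) (u v : Fin m → ℝ) (a b : ℕ → ℝ)
    (p q : ℝ → ℝ)
    (hp : ∀ γ : ℝ, p γ = ∏ i, (γ + 1 - u i))
    (hq : ∀ γ : ℝ, q γ = ∏ i, (γ + 2 - v i))
    (ha : ∀ γ : ℝ, p γ = ∑ j ∈ Finset.range (m + 1),
      (-1) ^ j * a j * (ascPochhammer ℝ j).eval (-γ))
    (hb : ∀ γ : ℝ, q γ = ∑ j ∈ Finset.range (m + 1),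
      (-1) ^ j * b j * (ascPochhammer ℝ j).eval (-γ)) :
    ∀ k : ℕ, k + 1 ≤ m → ∀ γ : ℝ,
      ∑ j ∈ Finset.Icc k m,
          ((j.choose (j - k) : ℝ) * a j - ((j + 1).choose (j - k) : ℝ) * b j) *
            (-1) ^ (j - k) * (ascPochhammer ℝ (j - k)).eval ((k : ℝ) - γ) =
        (1 / (k.factorial : ℝ)) * (nabla^[k] p) γ -
          (1 / ((k + 1).factorial : ℝ)) *
            (nabla^[k] fun γ => (1 + γ) * q γ - γ * q (γ - 1)) γ := by
  intro k _ γ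
  rw [nabla_iterate_apply, nabla_iterate_apply]
  exact R_prime_eq_general m a b p q ha hb k γ
end

section
/- Let m ≥ 1 and let u₁,…,u_m, v₁,…,v_m be real numbers with v_i > u_i > 0 for each i. Then there exists a probability density function f on [0,1] (a nonnegative integrable function with ∫₀¹ f = 1) whose moment sequence is ∫₀¹ xⁿ f(x) dx = ∏_{i=1}^m (u_i)_n/(v_i)_n for every natural number n. -/
open MeasureTheory Polynomial

/-!
A beta variable with parameters `uᵢ` and `vᵢ - uᵢ` has `n`-th moment `(uᵢ)ₙ / (vᵢ)ₙ`. Moments of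
independent variables multiply, so the product of independent beta variables, one for each `i`, has
the required moments, and it takes values in `(0, 1]`. Conditionally on all factors but one, it is
a nonzero multiple of a variable with a density; dilations preserve Lebesgue-null sets, so by Fubini
the law of the product is absolutely continuous.
-/

open ProbabilityTheory Set

section Beta

lemma real_Gamma_add_nat_div_Gamma_eq {z : ℝ} (hz : ∀ k : ℕ, z ≠ -k) (n : ℕ) :
    Real.Gamma (z + n) / Real.Gamma z = (ascPochhammer ℝ n).eval z := by
  apply Complex.ofReal_injective
  have h := Complex.Gamma_add_nat_div_Gamma_eq (n := n) z fun k ↦ mod_cast hz k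
  rw [Complex.ofReal_div, ← Complex.Gamma_ofReal, ← Complex.Gamma_ofReal, Complex.ofReal_add,
    Complex.ofReal_natCast, h]
  exact (ascPochhammer_eval₂ Complex.ofRealHom n z).trans
    (eval₂_at_apply Complex.ofRealHom z)

variable {a b : ℝ}

lemma beta_add_nat_div_beta (ha : 0 < a) (hb : 0 < b) (n : ℕ) :
    beta (a + n) b / beta a b =
      (ascPochhammer ℝ n).eval a / (ascPochhammer ℝ n).eval (a + b) := by
  have ne_neg_nat {z : ℝ} (hz : 0 < z) (k : ℕ) : z ≠ -k := by
    linarith [k.cast_nonneg (α := ℝ)]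
  have hab : 0 < a + b := add_pos ha hb
  rw [← real_Gamma_add_nat_div_Gamma_eq (ne_neg_nat ha),
    ← real_Gamma_add_nat_div_Gamma_eq (ne_neg_nat hab), beta, beta, add_right_comm]
  have := (Real.Gamma_pos_of_pos hb).ne'
  field_simp

lemma measurable_betaPDF (a b : ℝ) : Measurable (betaPDF a b) :=
  (measurable_betaPDFReal a b).ennreal_ofReal

lemma toReal_betaPDF_of_mem_Ioo (ha : 0 < a) (hb : 0 < b) {x : ℝ} (hx : x ∈ Ioo 0 1) :
    (betaPDF a b x).toReal = x ^ (a - 1) * (1 - x) ^ (b - 1) / beta a b := by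
  rw [betaPDF, ENNReal.toReal_ofReal (betaPDFReal_pos hx.1 hx.2 ha hb).le, betaPDFReal,
    if_pos ⟨hx.1, hx.2⟩]
  ring

lemma betaPDF_of_notMem_Ioo {x : ℝ} (hx : x ∉ Ioo 0 1) : betaPDF a b x = 0 := by
  rw [betaPDF_eq, if_neg (show ¬(0 < x ∧ x < 1) from hx), ENNReal.ofReal_zero]

lemma toReal_betaPDF_mul_rpow {p : ℝ} (ha : 0 < a) (hb : 0 < b) (hap : 0 < a + p) (x : ℝ) :
    (betaPDF a b x).toReal * x ^ p =
      beta (a + p) b / beta a b * (betaPDF (a + p) b x).toReal := by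
  by_cases hx : x ∈ Ioo 0 1
  · have hpow : x ^ (a + p - 1) = x ^ (a - 1) * x ^ p := by
      rw [← Real.rpow_add hx.1, sub_add_eq_add_sub]
    have := (beta_pos hap hb).ne'
    rw [toReal_betaPDF_of_mem_Ioo ha hb hx, toReal_betaPDF_of_mem_Ioo hap hb hx, hpow]
    field_simp
  · simp [betaPDF_of_notMem_Ioo hx]

lemma integral_toReal_betaPDF (ha : 0 < a) (hb : 0 < b) : ∫ x, (betaPDF a b x).toReal = 1 := by
  rw [integral_toReal (measurable_betaPDF a b).aemeasurable
    (ae_of_all _ fun _ ↦ ENNReal.ofReal_lt_top), lintegral_betaPDF_eq_one ha hb,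
    ENNReal.toReal_one]

lemma integral_rpow_betaMeasure {p : ℝ} (ha : 0 < a) (hb : 0 < b) (hap : 0 < a + p) :
    ∫ x, x ^ p ∂betaMeasure a b = beta (a + p) b / beta a b := by
  rw [betaMeasure, integral_withDensity_eq_integral_toReal_smul (measurable_betaPDF a b)
    (ae_of_all _ fun _ ↦ ENNReal.ofReal_lt_top)]
  simp_rw [smul_eq_mul, toReal_betaPDF_mul_rpow ha hb hap]
  rw [integral_const_mul, integral_toReal_betaPDF hap hb, mul_one]

lemma integral_pow_betaMeasure (ha : 0 < a) (hb : 0 < b) (n : ℕ) :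
    ∫ x, x ^ n ∂betaMeasure a b =
      (ascPochhammer ℝ n).eval a / (ascPochhammer ℝ n).eval (a + b) := by
  simp_rw [← Real.rpow_natCast]
  rw [integral_rpow_betaMeasure ha hb (by positivity), beta_add_nat_div_beta ha hb]

lemma ae_mem_Ioo_betaMeasure (a b : ℝ) : ∀ᵐ x ∂betaMeasure a b, x ∈ Ioo 0 1 := by
  rw [betaMeasure, ae_withDensity_iff (measurable_betaPDF a b)]
  exact ae_of_all _ fun _ ↦ not_imp_comm.mp betaPDF_of_notMem_Ioo

end Beta

section Density

variable {Ω : Type*} {mΩ : MeasurableSpace Ω} {P : Measure Ω}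

lemma mconv_absolutelyContinuous_volume_of_ae_ne_zero {μ ν : Measure ℝ} [SFinite ν]
    (hμ : ∀ᵐ x ∂μ, x ≠ 0) (hν : ν ≪ volume) : μ ∗ₘ ν ≪ volume := by
  refine Measure.AbsolutelyContinuous.mk fun s hs hs_null ↦ ?_
  have hs' : MeasurableSet ((fun p : ℝ × ℝ ↦ p.1 * p.2) ⁻¹' s) := measurable_mul hs
  rw [Measure.mconv, Measure.map_apply measurable_mul hs, Measure.measure_prod_null hs']
  filter_upwards [hμ] with x hx
  have fibre_null : volume ((x * ·) ⁻¹' s) = 0 := by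
    rw [Real.volume_preimage_mul_left hx, hs_null, mul_zero]
  exact hν fibre_null

lemma hasPDF_prod_of_iIndepFun {ι : Type*} [Fintype ι] {X : ι → Ω → ℝ} (hX : iIndepFun X P)
    (hX_meas : ∀ i, AEMeasurable (X i) P) (i : ι) [HasPDF (X i) P]
    (hX_ne : ∀ j ≠ i, ∀ᵐ ω ∂P, X j ω ≠ 0) : HasPDF (∏ j, X j) P := by
  classical
  have := hX.isProbabilityMeasure
  have hY_meas : AEMeasurable (∏ j ∈ Finset.univ.erase i, X j) P :=
    Finset.aemeasurable_prod _ fun j _ ↦ hX_meas j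
  have hY_ne : ∀ᵐ y ∂P.map (∏ j ∈ Finset.univ.erase i, X j), y ≠ 0 := by
    rw [ae_map_iff (p := (· ≠ 0)) hY_meas (measurableSet_singleton 0).compl]
    filter_upwards [ae_all_iff.2 fun j ↦ ae_all_iff.2 (hX_ne j)] with ω hω
    rw [Finset.prod_apply]
    exact Finset.prod_ne_zero_iff.2 fun j hj ↦ hω j (Finset.ne_of_mem_erase hj)
  rw [Real.hasPDF_iff_of_aemeasurable (Finset.aemeasurable_prod _ fun j _ ↦ hX_meas j),
    ← Finset.prod_erase_mul _ _ (Finset.mem_univ i),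
    (hX.indepFun_finsetProd_of_notMem₀ hX_meas (Finset.notMem_erase i _)).map_mul_eq_map_mconv_map₀
      hY_meas (hX_meas i)]
  exact mconv_absolutelyContinuous_volume_of_ae_ne_zero hY_ne HasPDF.absolutelyContinuous

lemma setIntegral_pdf_smul_of_ae_mem {E F : Type*} [MeasurableSpace E] [NormedAddCommGroup F]
    [NormedSpace ℝ F] [IsFiniteMeasure P] {μ : Measure E} {X : Ω → E} [HasPDF X P μ] {s : Set E}
    (hs : MeasurableSet s) (hXs : ∀ᵐ ω ∂P, X ω ∈ s) {f : E → F} (hf : AEStronglyMeasurable f μ) :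
    ∫ x in s, (pdf X P μ x).toReal • f x ∂μ = ∫ ω, f (X ω) ∂P := by
  calc ∫ x in s, (pdf X P μ x).toReal • f x ∂μ
    _ = ∫ x, (pdf X P μ x).toReal • s.indicator f x ∂μ := by
      rw [← integral_indicator hs]
      simp_rw [indicator_smul_apply]
    _ = ∫ ω, s.indicator f (X ω) ∂P := pdf.integral_pdf_smul (hf.indicator hs)
    _ = ∫ ω, f (X ω) ∂P := integral_congr_ae <| hXs.mono fun _ hω ↦ indicator_of_mem hω f

end Density

section BetaProduct

variable {ι Ω : Type*} {mΩ : MeasurableSpace Ω} {P : Measure Ω} {a b : ι → ℝ} {X : ι → Ω → ℝ}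

lemma ae_mem_Ioo_of_hasLaw_betaMeasure {a b : ℝ} {X : Ω → ℝ} (hX : HasLaw X (betaMeasure a b) P) :
    ∀ᵐ ω ∂P, X ω ∈ Ioo 0 1 :=
  (hX.ae_iff measurableSet_Ioo.mem).2 (ae_mem_Ioo_betaMeasure a b)

lemma hasPDF_of_hasLaw_betaMeasure {a b : ℝ} {X : Ω → ℝ} (hX : HasLaw X (betaMeasure a b) P) :
    HasPDF X P :=
  hasPDF_of_map_eq_withDensity hX.aemeasurable _ (measurable_betaPDF a b).aemeasurable hX.map_eq

variable [Fintype ι]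

lemma ae_prod_mem_Ioc_of_hasLaw_betaMeasure
    (hX_law : ∀ i, HasLaw (X i) (betaMeasure (a i) (b i)) P) :
    ∀ᵐ ω ∂P, (∏ i, X i) ω ∈ Ioc 0 1 := by
  filter_upwards [ae_all_iff.2 fun i ↦ ae_mem_Ioo_of_hasLaw_betaMeasure (hX_law i)] with ω hω
  rw [Finset.prod_apply]
  exact ⟨Finset.prod_pos fun i _ ↦ (hω i).1,
    Finset.prod_le_one (fun i _ ↦ (hω i).1.le) fun i _ ↦ (hω i).2.le⟩

lemma hasPDF_prod_of_hasLaw_betaMeasure [Nonempty ι]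
    (hX_law : ∀ i, HasLaw (X i) (betaMeasure (a i) (b i)) P) (hX : iIndepFun X P) :
    HasPDF (∏ i, X i) P := by
  have := hasPDF_of_hasLaw_betaMeasure (hX_law (Classical.arbitrary ι))
  exact hasPDF_prod_of_iIndepFun hX (fun i ↦ (hX_law i).aemeasurable) (Classical.arbitrary ι)
    fun j _ ↦ (ae_mem_Ioo_of_hasLaw_betaMeasure (hX_law j)).mono fun _ hω ↦ hω.1.ne'

lemma integral_prod_pow_of_hasLaw_betaMeasure
    (hX_law : ∀ i, HasLaw (X i) (betaMeasure (a i) (b i)) P)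
    (ha : ∀ i, 0 < a i) (hb : ∀ i, 0 < b i) (hX : iIndepFun X P) (n : ℕ) :
    ∫ ω, (∏ i, X i) ω ^ n ∂P =
      ∏ i, (ascPochhammer ℝ n).eval (a i) / (ascPochhammer ℝ n).eval (a i + b i) := by
  have hpow : Continuous fun x : ℝ ↦ x ^ n := continuous_pow n
  simp_rw [Finset.prod_apply, ← Finset.prod_pow]
  rw [hX.integral_fun_prod_comp (f := fun _ x ↦ x ^ n) (fun i ↦ (hX_law i).aemeasurable)
    fun _ ↦ hpow.aestronglyMeasurable]
  refine Finset.prod_congr rfl fun i _ ↦ ?_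
  rw [← integral_pow_betaMeasure (ha i) (hb i)]
  exact (hX_law i).integral_comp hpow.aestronglyMeasurable

lemma intervalIntegral_pow_mul_pdf_prod_of_hasLaw_betaMeasure [Nonempty ι]
    (hX_law : ∀ i, HasLaw (X i) (betaMeasure (a i) (b i)) P)
    (ha : ∀ i, 0 < a i) (hb : ∀ i, 0 < b i) (hX : iIndepFun X P) (n : ℕ) :
    ∫ x in (0 : ℝ)..1, x ^ n * (pdf (∏ i, X i) P volume x).toReal =
      ∏ i, (ascPochhammer ℝ n).eval (a i) / (ascPochhammer ℝ n).eval (a i + b i) := by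
  have := hX.isProbabilityMeasure
  have := hasPDF_prod_of_hasLaw_betaMeasure hX_law hX
  rw [← integral_prod_pow_of_hasLaw_betaMeasure hX_law ha hb hX,
    intervalIntegral.integral_of_le zero_le_one]
  simp_rw [mul_comm (_ ^ n), ← smul_eq_mul]
  exact setIntegral_pdf_smul_of_ae_mem measurableSet_Ioc
    (ae_prod_mem_Ioc_of_hasLaw_betaMeasure hX_law) (continuous_pow n).aestronglyMeasurable

end BetaProduct

/-- For `vᵢ > uᵢ > 0` there exists a probability density on `[0,1]` with moment
    sequence `∏ᵢ (uᵢ)ₙ/(vᵢ)ₙ`. -/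
theorem exists_density_with_pochhammer_moments (m : ℕ) (hm : 1 ≤ m)
    (u v : Fin m → ℝ) (huv : ∀ i, 0 < u i ∧ u i < v i) :
    ∃ f : ℝ → ℝ,
      (∀ x ∈ Set.Icc (0:ℝ) 1, 0 ≤ f x) ∧
      IntegrableOn f (Set.Icc (0:ℝ) 1) ∧
      (∫ x in (0:ℝ)..1, f x) = 1 ∧
      ∀ n : ℕ, ∫ x in (0:ℝ)..1, x ^ n * f x =
        ∏ i, (ascPochhammer ℝ n).eval (u i) / (ascPochhammer ℝ n).eval (v i) := by
  have : Nonempty (Fin m) := ⟨⟨0, hm⟩⟩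
  have hu i : 0 < u i := (huv i).1
  have hvu i : 0 < v i - u i := sub_pos.2 (huv i).2
  let ν i := betaMeasure (u i) (v i - u i)
  have (i : Fin m) : IsProbabilityMeasure (ν i) := isProbabilityMeasureBeta (hu i) (hvu i)
  let P := Measure.pi ν
  let X (i : Fin m) (ω : Fin m → ℝ) := ω i
  have hX : iIndepFun X P := iIndepFun_pi fun _ ↦ aemeasurable_id
  have hX_law i : HasLaw (X i) (ν i) P := (measurePreserving_eval ν i).hasLaw
  have moments := intervalIntegral_pow_mul_pdf_prod_of_hasLaw_betaMeasure hX_law hu hvu hX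
  simp only [add_sub_cancel] at moments
  exact ⟨fun x ↦ (pdf (∏ i, X i) P volume x).toReal, fun _ _ ↦ ENNReal.toReal_nonneg,
    Measure.integrable_toReal_rnDeriv.integrableOn, by simpa using moments 0, moments⟩
end

section
/- The maximum of the function x ↦ ∏_{1≤i<j≤4} (x_i − x_j)² over the unit sphere S = {x ∈ ℝ⁴ : x₁² + x₂² + x₃² + x₄² = 1} equals 1/108; that is, ∏_{1≤i<j≤4}(x_i−x_j)² ≤ 1/108 for all x ∈ S, and there exists x ∈ S achieving equality (the maximizers are the 24 points whose coordinates are permutations of {±(1/6)√(9+3√6), ±(1/6)√(9−3√6)}). -/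
/-!
Let `y` have distinct coordinates satisfying Stieltjes' relations `∑_{j ≠ i} 1 / (yᵢ - yⱼ) = c yᵢ`,
which express that `y` is critical for the discriminant on its sphere. For `x` ordered like `y` the
ratios `rᵢⱼ = (xᵢ - xⱼ) / (yᵢ - yⱼ)` are nonnegative, so `rᵢⱼ ≤ exp (rᵢⱼ - 1)`; multiplying, the
quotient of the two Vandermonde determinants is at most `exp (c ⟨x - y, y⟩)`, and
`⟨x - y, y⟩ ≤ (‖x‖² - ‖y‖²) / 2`. Hence `y` is a global maximizer. In dimension four the relations
are solved on the unit sphere, with `c = 6`, by the roots of the rescaled Hermite polynomial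
`t⁴ - t² / 2 + 1 / 48`.
-/

open Finset
open Matrix (vandermonde det_vandermonde det_vandermonde_ne_zero_iff abs_det_submatrix_equiv_equiv)

theorem sub_div_sub_nonneg_of_monovary {ι K : Type*} [Field K] [LinearOrder K]
    [IsStrictOrderedRing K] {x y : ι → K} (h : Monovary x y) (i j : ι) :
    0 ≤ (x j - x i) / (y j - y i) :=
  div_nonneg_iff.2 (mul_nonneg_iff.1 (h.sub_mul_sub_nonneg i j))

section Stieltjes

/-- Stieltjes' relations: for `K = ℝ`, `y` is an equilibrium of unit charges on the line under
logarithmic repulsion and a linear restoring force of strength `c`. Since `0⁻¹ = 0`, this has its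
intended meaning only for injective `y`; for real `c > 0` the `y i` are then the zeros of a rescaled
Hermite polynomial. -/
def StieltjesRelations {ι K : Type*} [Fintype ι] [DecidableEq ι] [Field K] (c : K) (y : ι → K) :
    Prop :=
  ∀ i, ∑ j ∈ {i}ᶜ, (y i - y j)⁻¹ = c * y i

variable {ι : Type*} [Fintype ι] [LinearOrder ι] [LocallyFiniteOrderTop ι] [LocallyFiniteOrderBot ι]

theorem StieltjesRelations.sum_sub_div_sub {K : Type*} [Field K] {c : K} {y : ι → K}
    (h : StieltjesRelations c y) (x : ι → K) :
    ∑ i, ∑ j ∈ Ioi i, (x j - x i) / (y j - y i) = c * ∑ i, x i * y i := by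
  have symmetrize (i j : ι) :
      (x j - x i) / (y j - y i) = x i * (y i - y j)⁻¹ + x j * (y j - y i)⁻¹ := by
    rw [← neg_sub (y j) (y i), inv_neg]
    ring
  calc ∑ i, ∑ j ∈ Ioi i, (x j - x i) / (y j - y i)
      = ∑ i, ∑ j ∈ {i}ᶜ, x i * (y i - y j)⁻¹ := by
        simp only [symmetrize]
        exact sum_sum_Ioi_add_eq_sum_sum_off_diag fun j i ↦ x i * (y i - y j)⁻¹
    _ = c * ∑ i, x i * y i := by
        simp only [← mul_sum, h _, mul_left_comm _ c]

theorem StieltjesRelations.sum_sub_div_sub_sub_one_nonpos {K : Type*} [Field K]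
    [LinearOrder K] [IsStrictOrderedRing K] {c : K} {x y : ι → K} (h : StieltjesRelations c y)
    (hc : 0 ≤ c) (hy : Function.Injective y) (hxy : ∑ i, x i ^ 2 ≤ ∑ i, y i ^ 2) :
    ∑ i, ∑ j ∈ Ioi i, ((x j - x i) / (y j - y i) - 1) ≤ 0 := by
  have inner_nonpos : ∑ i, (x i - y i) * y i ≤ 0 :=
    calc ∑ i, (x i - y i) * y i
        ≤ ∑ i, (x i ^ 2 - y i ^ 2) / 2 :=
          sum_le_sum fun i _ ↦ by linarith [sq_nonneg (x i - y i)]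
      _ = (∑ i, x i ^ 2 - ∑ i, y i ^ 2) / 2 := by rw [← sum_div, sum_sub_distrib]
      _ ≤ 0 := by linarith
  calc ∑ i, ∑ j ∈ Ioi i, ((x j - x i) / (y j - y i) - 1)
      = ∑ i, ∑ j ∈ Ioi i, ((x j - y j) - (x i - y i)) / (y j - y i) := by
        refine sum_congr rfl fun i _ ↦ sum_congr rfl fun j hj ↦ ?_
        rw [div_sub_one (sub_ne_zero.2 (hy.ne (mem_Ioi.1 hj).ne')), sub_sub_sub_comm]
    _ = c * ∑ i, (x i - y i) * y i := h.sum_sub_div_sub fun i ↦ x i - y i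
    _ ≤ 0 := mul_nonpos_of_nonneg_of_nonpos hc inner_nonpos

theorem StieltjesRelations.prod_sub_div_sub_le_one {c : ℝ} {x y : ι → ℝ}
    (h : StieltjesRelations c y) (hc : 0 ≤ c) (hy : Function.Injective y)
    (hxy : ∑ i, x i ^ 2 ≤ ∑ i, y i ^ 2) (hmono : Monovary x y) :
    ∏ i, ∏ j ∈ Ioi i, (x j - x i) / (y j - y i) ≤ 1 :=
  calc ∏ i, ∏ j ∈ Ioi i, (x j - x i) / (y j - y i)
      ≤ ∏ i, ∏ j ∈ Ioi i, Real.exp ((x j - x i) / (y j - y i) - 1) := by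
        gcongr with i _ j _
        · exact fun i _ ↦ prod_nonneg fun j _ ↦ sub_div_sub_nonneg_of_monovary hmono i j
        · exact fun j _ ↦ sub_div_sub_nonneg_of_monovary hmono i j
        · simpa using Real.add_one_le_exp ((x j - x i) / (y j - y i) - 1)
    _ = Real.exp (∑ i, ∑ j ∈ Ioi i, ((x j - x i) / (y j - y i) - 1)) := by
        simp only [Real.exp_sum]
    _ ≤ 1 := Real.exp_le_one_iff.2 (h.sum_sub_div_sub_sub_one_nonpos hc hy hxy)

end Stieltjes

section Vandermonde

variable {n : ℕ}

theorem prod_lt_sq_sub_eq_det_vandermonde_sq {R : Type*} [CommRing R] (x : Fin n → R) :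
    ∏ p : Fin n × Fin n with p.1 < p.2, (x p.1 - x p.2) ^ 2 = (vandermonde x).det ^ 2 := by
  simp_rw [det_vandermonde, ← prod_pow, sub_sq_comm (x _) (x _), prod_filter,
    Fintype.prod_prod_type, ← prod_filter, filter_lt_eq_Ioi]

theorem abs_det_vandermonde_comp_perm {R : Type*} [CommRing R] [LinearOrder R]
    [IsStrictOrderedRing R] (x : Fin n → R) (σ : Equiv.Perm (Fin n)) :
    |(vandermonde (x ∘ σ)).det| = |(vandermonde x).det| :=
  abs_det_submatrix_equiv_equiv σ (Equiv.refl _) (vandermonde x)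

theorem exists_perm_monovary {α β : Type*} [LinearOrder α] [LinearOrder β]
    (x : Fin n → α) (y : Fin n → β) : ∃ σ : Equiv.Perm (Fin n), Monovary (x ∘ σ) y := by
  refine ⟨(Tuple.sort y).symm.trans (Tuple.sort x), ?_⟩
  have h := ((Tuple.monotone_sort x).monovary (Tuple.monotone_sort y)).comp_right
    (Tuple.sort y).symm
  simpa [Function.comp_assoc] using h

variable {c : ℝ} {x y : Fin n → ℝ}

theorem StieltjesRelations.abs_det_vandermonde_le (h : StieltjesRelations c y) (hc : 0 ≤ c)
    (hy : Function.Injective y) (hxy : ∑ i, x i ^ 2 ≤ ∑ i, y i ^ 2) :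
    |(vandermonde x).det| ≤ |(vandermonde y).det| := by
  obtain ⟨σ, hσ⟩ := exists_perm_monovary x y
  have hσxy : ∑ i, (x ∘ σ) i ^ 2 ≤ ∑ i, y i ^ 2 :=
    (Equiv.sum_comp σ fun i ↦ x i ^ 2).trans_le hxy
  have ratio_le_one : |(vandermonde (x ∘ σ)).det| / |(vandermonde y).det| ≤ 1 := by
    rw [← abs_div, det_vandermonde, det_vandermonde]
    simp only [← prod_div_distrib]
    rw [abs_of_nonneg
      (prod_nonneg fun i _ ↦ prod_nonneg fun j _ ↦ sub_div_sub_nonneg_of_monovary hσ i j)]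
    exact h.prod_sub_div_sub_le_one hc hy hσxy hσ
  rw [← abs_det_vandermonde_comp_perm x σ]
  exact (div_le_one (abs_pos.2 (det_vandermonde_ne_zero_iff.2 hy))).1 ratio_le_one

end Vandermonde

section FourPoints

variable {K : Type*} [Field K]

-- `hsum` and `hprod` say that `±a, ±b` are the zeros of `c² t⁴ - 3 c t² + 3 / 4`, which is
-- `H₄ (√c t) / 16` for the Hermite polynomial `H₄`.
theorem inv_sub_add_inv_add_add_inv_add_self [CharZero K] {a b c : K}
    (hsum : c * (a ^ 2 + b ^ 2) = 3) (hprod : c ^ 2 * (a ^ 2 * b ^ 2) = 3 / 4) :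
    (a - b)⁻¹ + (a + b)⁻¹ + (a + a)⁻¹ = c * a := by
  have hc : c ≠ 0 := left_ne_zero_of_mul (hsum.trans_ne three_ne_zero)
  have ha : a ≠ 0 := by
    rintro rfl
    norm_num at hprod
  have hdiff : a ^ 2 - b ^ 2 ≠ 0 := by
    intro h
    have six_eq_zero : (6 : K) = 0 := by
      linear_combination c ^ 2 * (a ^ 2 - b ^ 2) * h - (c * (a ^ 2 + b ^ 2) + 3) * hsum + 4 * hprod
    norm_num at six_eq_zero
  have hsub_add : (a + b) * (a - b) ≠ 0 := sq_sub_sq a b ▸ hdiff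
  have hadd : a + b ≠ 0 := left_ne_zero_of_mul hsub_add
  have hsub : a - b ≠ 0 := right_ne_zero_of_mul hsub_add
  have cleared : 5 * a ^ 2 - b ^ 2 = 2 * c * a ^ 2 * (a ^ 2 - b ^ 2) :=
    mul_left_cancel₀ hc (by linear_combination 4 * hprod - (2 * c * a ^ 2 + 1) * hsum)
  rw [← two_mul a]
  field_simp
  linear_combination cleared

theorem stieltjesRelations_symmetric_quadruple [CharZero K] {a b c : K}
    (hsum : c * (a ^ 2 + b ^ 2) = 3) (hprod : c ^ 2 * (a ^ 2 * b ^ 2) = 3 / 4) :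
    StieltjesRelations c ![a, b, -b, -a] := by
  have at_a := inv_sub_add_inv_add_add_inv_add_self hsum hprod
  have at_b := inv_sub_add_inv_add_add_inv_add_self (a := b) (b := a)
    (by rwa [add_comm]) (by rwa [mul_comm (b ^ 2)])
  have inv_sub_swap : (b - a)⁻¹ = -(a - b)⁻¹ := by rw [← inv_neg, neg_sub]
  have neg_sub_inv (s t : K) : (-s - t)⁻¹ = -(s + t)⁻¹ := by rw [← inv_neg, neg_add']
  intro i
  -- The additional term `j = i` is `0⁻¹ = 0`.
  have sum_compl : ∑ j ∈ {i}ᶜ, (![a, b, -b, -a] i - ![a, b, -b, -a] j)⁻¹ =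
      ∑ j, (![a, b, -b, -a] i - ![a, b, -b, -a] j)⁻¹ := by
    simp [Fintype.sum_eq_add_sum_compl i]
  rw [sum_compl, Fin.sum_univ_four]
  fin_cases i <;>
    simp only [Fin.reduceFinMk, Fin.zero_eta, Fin.mk_one, Matrix.cons_val, sub_self, inv_zero,
      sub_neg_eq_add, neg_sub_inv, neg_add_eq_sub, inv_sub_swap, add_comm b a] at at_b ⊢
  · linear_combination at_a
  · linear_combination at_b
  · linear_combination -at_b
  · linear_combination -at_a

theorem injective_symmetric_quadruple {G : Type*} [AddCommGroup G] [LinearOrder G]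
    [IsOrderedAddMonoid G] {a b : G} (hb : 0 < b) (hab : b < a) :
    Function.Injective ![a, b, -b, -a] := by
  have hanti : StrictAnti ![a, b, -b, -a] := by simp [hab, hb]
  exact hanti.injective

theorem det_vandermonde_symmetric_quadruple_sq {R : Type*} [CommRing R] (a b : R) :
    (vandermonde ![a, b, -b, -a]).det ^ 2 = 16 * (a ^ 2 * b ^ 2) * (a ^ 2 - b ^ 2) ^ 4 := by
  rw [← prod_lt_sq_sub_eq_det_vandermonde_sq, prod_filter, Fintype.prod_prod_type]
  simp only [Fin.prod_univ_four, Fin.isValue, Fin.reduceLT, lt_self_iff_false, ↓reduceIte,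
    Matrix.cons_val]
  ring

theorem exists_sq_add_sq_eq_half_sq_mul_sq_eq : ∃ a b : ℝ,
    0 < b ∧ b < a ∧ a ^ 2 + b ^ 2 = 1 / 2 ∧ a ^ 2 * b ^ 2 = 1 / 48 := by
  have sqrt_six_sq : √6 ^ 2 = 6 := Real.sq_sqrt (by norm_num)
  have sqrt_six_lt : √6 < 3 := by rw [Real.sqrt_lt'] <;> norm_num
  have sqrt_six_pos : 0 < √6 := by positivity
  have sq_a : (√(9 + 3 * √6) / 6) ^ 2 = (9 + 3 * √6) / 36 := by
    rw [div_pow, Real.sq_sqrt (by linarith)]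
    norm_num
  have sq_b : (√(9 - 3 * √6) / 6) ^ 2 = (9 - 3 * √6) / 36 := by
    rw [div_pow, Real.sq_sqrt (by linarith)]
    norm_num
  refine ⟨√(9 + 3 * √6) / 6, √(9 - 3 * √6) / 6, ?_, ?_, ?_, ?_⟩
  · exact div_pos (Real.sqrt_pos.2 (by linarith)) (by norm_num)
  · refine div_lt_div_of_pos_right (Real.sqrt_lt_sqrt ?_ ?_) (by norm_num) <;> linarith
  · rw [sq_a, sq_b]
    ring
  · rw [sq_a, sq_b]
    linear_combination -sqrt_six_sq / 144

theorem exists_stieltjesRelations_six : ∃ y : Fin 4 → ℝ, Function.Injective y ∧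
    StieltjesRelations 6 y ∧ ∑ i, y i ^ 2 = 1 ∧ (vandermonde y).det ^ 2 = 1 / 108 := by
  obtain ⟨a, b, hb, hba, hsum, hprod⟩ := exists_sq_add_sq_eq_half_sq_mul_sq_eq
  refine ⟨![a, b, -b, -a], injective_symmetric_quadruple hb hba,
    stieltjesRelations_symmetric_quadruple (by linarith) (by linarith), ?_, ?_⟩
  · simp only [Fin.sum_univ_four, Matrix.cons_val]
    linarith
  · have hdiff : (a ^ 2 - b ^ 2) ^ 2 = 1 / 6 := by
      linear_combination (a ^ 2 + b ^ 2 + 1 / 2) * hsum - 4 * hprod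
    rw [det_vandermonde_symmetric_quadruple_sq, hprod, pow_mul _ 2 2, hdiff]
    norm_num

end FourPoints

/-- The maximum of `∏_{1≤i<j≤4} (xᵢ−xⱼ)²` over the unit sphere of `ℝ⁴`
    equals `1/108`. -/
theorem max_discriminant_on_sphere :
    (∀ x : Fin 4 → ℝ, (∑ i, x i ^ 2) = 1 →
      (∏ p ∈ Finset.univ.filter (fun p : Fin 4 × Fin 4 => p.1 < p.2),
        (x p.1 - x p.2) ^ 2) ≤ 1 / 108) ∧
    ∃ x : Fin 4 → ℝ, (∑ i, x i ^ 2) = 1 ∧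
      (∏ p ∈ Finset.univ.filter (fun p : Fin 4 × Fin 4 => p.1 < p.2),
        (x p.1 - x p.2) ^ 2) = 1 / 108 := by
  obtain ⟨y, hy, hrel, hy_norm, hy_disc⟩ := exists_stieltjesRelations_six
  simp only [prod_lt_sq_sub_eq_det_vandermonde_sq]
  refine ⟨fun x hx ↦ ?_, y, hy_norm, hy_disc⟩
  rw [← hy_disc, sq_le_sq]
  exact hrel.abs_det_vandermonde_le (by norm_num) hy (hx.trans hy_norm.symm).le
end

section
/- Let S = {x ∈ ℝ⁴ : x₁²+x₂²+x₃²+x₄² = 1} be the 3-dimensional unit sphere with its normalized surface (rotation-invariant probability) measure ω. Then for every real κ ≥ 0, ∫_S ∏_{1≤i<j≤4} |x_i − x_j|^{2κ} dω(x) = 2^{−6κ} · Γ(1+2κ) Γ(1+3κ) Γ(1+4κ) / (Γ(2+6κ) Γ(1+κ)³). -/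
open MeasureTheory

/-!
A Gaussian vector is its norm times an independent uniform point of the sphere, so the spherical
integral is, up to a quotient of Gamma values, the Gaussian integral `W κ` of
`∏ i < j, |xᵢ - xⱼ| ^ (2κ)`. A reflection of `ℝ⁴` carries the roots `eᵢ - eⱼ` to the roots of `D₃`,
whose invariants have degrees `2, 3, 4` and involve three coordinates only. Let `δ` be the product
of the positive roots of `D₃`. For a basic invariant `f`, `∇f · ∇δ` is a multiple of `δ`, so
Gaussian integration by parts along `∇f` against the weight `|δ| ^ (2κ)` relates the moments of
polynomials in the invariants. Since `δ ^ 2` is such a polynomial, this yields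
`W (κ + 1) = P κ * W κ` for an explicit polynomial `P`. Both `W κ * Γ(1 + κ) ^ 3` and
`Γ(1 + 2κ) Γ(1 + 3κ) Γ(1 + 4κ)` are logarithmically convex and satisfy the same recurrence, hence
agree as in the Bohr–Mollerup theorem.
-/

namespace MacdonaldMehta

open Filter Module ProbabilityTheory Set Topology
open scoped RealInnerProductSpace

section Uniqueness

variable {f f₁ f₂ g : ℝ → ℝ} {S : Set ℝ} {x s : ℝ}

lemma mul_sub_le_sub_of_convexOn (hf : ConvexOn ℝ S f) (hx : x - 1 ∈ S) (hxs : x + s ∈ S)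
    (hs : 0 ≤ s) : s * (f x - f (x - 1)) ≤ f (x + s) - f x := by
  have h := hf.2 hx hxs (show 0 ≤ s / (1 + s) by positivity)
    (show 0 ≤ 1 / (1 + s) by positivity) (by field_simp; ring)
  have hcomb : (s / (1 + s)) • (x - 1) + (1 / (1 + s)) • (x + s) = x := by
    simp only [smul_eq_mul]; field_simp; ring
  rw [hcomb, smul_eq_mul, smul_eq_mul, div_mul_eq_mul_div, div_mul_eq_mul_div, ← add_div,
    le_div_iff₀ (by positivity)] at h
  linarith

lemma sub_le_mul_sub_of_convexOn (hf : ConvexOn ℝ S f) (hx : x ∈ S) (hx1 : x + 1 ∈ S)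
    (hs : s ∈ Icc (0 : ℝ) 1) : f (x + s) - f x ≤ s * (f (x + 1) - f x) := by
  have h := hf.2 hx hx1 (sub_nonneg.2 hs.2) hs.1 (sub_add_cancel 1 s)
  have hcomb : (1 - s) • x + s • (x + 1) = x + s := by simp only [smul_eq_mul]; ring
  rw [hcomb, smul_eq_mul, smul_eq_mul] at h
  linarith

lemma sub_mem_Icc_of_convexOn (hf : ConvexOn ℝ (Ici 0) f)
    (h : ∀ x, 0 ≤ x → f (x + 1) = f x + g x) (hx : 0 ≤ x) (hs : s ∈ Icc (0 : ℝ) 1) :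
    f (x + 1 + s) - f (x + 1) ∈ Icc (s * g x) (s * g (x + 1)) := by
  have lower := mul_sub_le_sub_of_convexOn (x := x + 1) hf (by simpa using hx)
    (mem_Ici.2 (add_nonneg (by positivity) hs.1)) hs.1
  have upper := sub_le_mul_sub_of_convexOn (x := x + 1) hf (mem_Ici.2 (by positivity))
    (mem_Ici.2 (by positivity)) hs
  rw [add_sub_cancel_right, h x hx, add_sub_cancel_left, ← h x hx] at lower
  rw [h (x + 1) (by positivity), add_sub_cancel_left] at upper
  exact ⟨lower, upper⟩

lemma apply_add_nat_sub_eq (h₁ : ∀ x, 0 ≤ x → f₁ (x + 1) = f₁ x + g x)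
    (h₂ : ∀ x, 0 ≤ x → f₂ (x + 1) = f₂ x + g x) (hx : 0 ≤ x) (n : ℕ) :
    f₁ (x + n) - f₂ (x + n) = f₁ x - f₂ x := by
  induction n with
  | zero => simp
  | succ n ih =>
    have hxn : 0 ≤ x + n := by positivity
    rw [Nat.cast_succ, ← add_assoc, h₁ _ hxn, h₂ _ hxn, ← ih]
    ring

/- Krull–Webster: convexity pins `fᵢ (n + s) - fᵢ n` between `s * g (n - 1)` and `s * g n`, and
`f₁ - f₂` is periodic. -/
theorem eqOn_of_convexOn_of_apply_add_one (hf₁ : ConvexOn ℝ (Ici 0) f₁)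
    (hf₂ : ConvexOn ℝ (Ici 0) f₂) (h₁ : ∀ x, 0 ≤ x → f₁ (x + 1) = f₁ x + g x)
    (h₂ : ∀ x, 0 ≤ x → f₂ (x + 1) = f₂ x + g x) (h0 : f₁ 0 = f₂ 0)
    (hg : Tendsto (fun n : ℕ => g (n + 1) - g n) atTop (𝓝 0)) : EqOn f₁ f₂ (Ici 0) := by
  intro x hx
  set s := Int.fract x
  have hs : s ∈ Icc (0 : ℝ) 1 := ⟨Int.fract_nonneg x, (Int.fract_lt_one x).le⟩
  have hxs : x = s + ⌊x⌋₊ := by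
    rw [natCast_floor_eq_intCast_floor hx]; exact (Int.fract_add_floor x).symm
  have bound : ∀ n : ℕ, |f₁ x - f₂ x| ≤ s * (g (n + 1) - g n) := by
    intro n
    have hper : f₁ (n + 1 + s) - f₂ (n + 1 + s) = f₁ x - f₂ x := by
      have := apply_add_nat_sub_eq h₁ h₂ hs.1 (n + 1)
      rw [hxs, apply_add_nat_sub_eq h₁ h₂ hs.1, ← this, Nat.cast_succ, add_comm s]
    have hnat : f₁ (n + 1) - f₂ (n + 1) = 0 := by
      simpa [h0] using apply_add_nat_sub_eq h₁ h₂ le_rfl (n + 1)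
    obtain ⟨l₁, u₁⟩ := sub_mem_Icc_of_convexOn hf₁ h₁ n.cast_nonneg hs
    obtain ⟨l₂, u₂⟩ := sub_mem_Icc_of_convexOn hf₂ h₂ n.cast_nonneg hs
    rw [abs_le]
    constructor <;> linarith
  have hlim : Tendsto (fun n : ℕ => s * (g (n + 1) - g n)) atTop (𝓝 0) := by
    simpa using hg.const_mul s
  have := ge_of_tendsto' hlim bound
  exact sub_eq_zero.1 (abs_nonpos_iff.1 this)

lemma tendsto_eval_add_one_div_eval {P : Polynomial ℝ} (hP : P ≠ 0) :
    Tendsto (fun x : ℝ => P.eval (x + 1) / P.eval x) atTop (𝓝 1) := by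
  have h := (P.taylor 1).div_tendsto_atTop_leadingCoeff_div_of_degree_eq P (P.degree_taylor 1)
  rw [P.leadingCoeff_taylor, div_self (Polynomial.leadingCoeff_ne_zero.2 hP)] at h
  simpa only [Polynomial.taylor_eval] using h

theorem eqOn_of_log_convexOn_of_polynomial_recurrence {F₁ F₂ : ℝ → ℝ} {P : Polynomial ℝ}
    (hF₁ : ConvexOn ℝ (Ici 0) fun x => Real.log (F₁ x))
    (hF₂ : ConvexOn ℝ (Ici 0) fun x => Real.log (F₂ x))
    (pos₁ : ∀ x, 0 ≤ x → 0 < F₁ x) (pos₂ : ∀ x, 0 ≤ x → 0 < F₂ x)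
    (h₁ : ∀ x, 0 ≤ x → F₁ (x + 1) = P.eval x * F₁ x)
    (h₂ : ∀ x, 0 ≤ x → F₂ (x + 1) = P.eval x * F₂ x) (h0 : F₁ 0 = F₂ 0) :
    EqOn F₁ F₂ (Ici 0) := by
  have hP : ∀ x, 0 ≤ x → 0 < P.eval x := fun x hx =>
    pos_of_mul_pos_left (h₁ x hx ▸ pos₁ (x + 1) (by positivity)) (pos₁ x hx).le
  have hP0 : P ≠ 0 := fun h => by simpa [h] using hP 0 le_rfl
  have log_recurrence : ∀ F : ℝ → ℝ, (∀ x, 0 ≤ x → 0 < F x) →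
      (∀ x, 0 ≤ x → F (x + 1) = P.eval x * F x) → ∀ x, 0 ≤ x →
      Real.log (F (x + 1)) = Real.log (F x) + Real.log (P.eval x) := by
    intro F pos h x hx
    rw [h x hx, Real.log_mul (hP x hx).ne' (pos x hx).ne', add_comm]
  have hlim : Tendsto (fun n : ℕ => Real.log (P.eval (n + 1)) - Real.log (P.eval n)) atTop
      (𝓝 0) := by
    have := (tendsto_eval_add_one_div_eval hP0).comp tendsto_natCast_atTop_atTop |>.log one_ne_zero
    rw [Real.log_one] at this
    refine this.congr fun n => Real.log_div (hP _ ?_).ne' (hP _ ?_).ne' <;> positivity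
  have key := eqOn_of_convexOn_of_apply_add_one hF₁ hF₂ (log_recurrence F₁ pos₁ h₁)
    (log_recurrence F₂ pos₂ h₂) (by rw [h0]) hlim
  exact fun x hx => Real.log_injOn_pos (pos₁ x hx) (pos₂ x hx) (key hx)

end Uniqueness

section Gamma

open Real

variable {a x : ℝ}

lemma convexOn_log_Gamma_one_add_mul (ha : 0 ≤ a) :
    ConvexOn ℝ (Ici 0) fun x => log (Gamma (1 + a * x)) := by
  have h := convexOn_log_Gamma.comp_affineMap (AffineMap.lineMap (1 : ℝ) (1 + a))
  refine (h.subset (fun x hx => ?_) (convex_Ici 0)).congr fun x _ => ?_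
  · have : 0 ≤ a * x := mul_nonneg ha hx
    simp only [AffineMap.lineMap_apply_ring', add_sub_cancel_left, mem_preimage, mem_Ioi]
    linarith
  · simp [AffineMap.lineMap_apply_ring', mul_comm, add_comm]

lemma Gamma_add_nat_eq_prod (hx : 0 < x) (n : ℕ) :
    Gamma (x + n) = (∏ i ∈ Finset.range n, (x + i)) * Gamma x := by
  induction n with
  | zero => simp
  | succ n ih =>
    rw [Nat.cast_succ, ← add_assoc, Gamma_add_one (by positivity), ih, Finset.prod_range_succ]
    ring

end Gamma

section LogConvexity

variable {α : Type*} {mα : MeasurableSpace α} {μ : Measure α}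

lemma integral_rpow_mul_rpow_le {u v : α → ℝ} (hu0 : 0 ≤ u) (hv0 : 0 ≤ v) (hu : Integrable u μ)
    (hv : Integrable v μ) {a b : ℝ} (ha : 0 < a) (hb : 0 < b) (hab : a + b = 1) :
    ∫ x, u x ^ a * v x ^ b ∂μ ≤ (∫ x, u x ∂μ) ^ a * (∫ x, v x ∂μ) ^ b := by
  have memLp_rpow : ∀ {w : α → ℝ} {c : ℝ}, 0 ≤ w → Integrable w μ → 0 < c →
      MemLp (fun x => w x ^ c) (ENNReal.ofReal (1 / c)) μ := by
    intro w c hw0 hw hc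
    have := (memLp_one_iff_integrable.2 hw).norm_rpow_div (ENNReal.ofReal c)
    rw [ENNReal.toReal_ofReal hc.le] at this
    rw [ENNReal.ofReal_div_of_pos hc, ENNReal.ofReal_one]
    simpa only [Real.norm_of_nonneg (hw0 _)] using this
  have rpow_rpow_one_div : ∀ {w : α → ℝ} {c : ℝ}, 0 ≤ w → 0 < c →
      ∀ x, (w x ^ c) ^ (1 / c) = w x := fun hw0 hc x => by
    rw [one_div, Real.rpow_rpow_inv (hw0 x) hc.ne']
  have holder := integral_mul_le_Lp_mul_Lq_of_nonneg (Real.holderConjugate_one_div ha hb hab)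
    (.of_forall fun x => Real.rpow_nonneg (hu0 x) a)
    (.of_forall fun x => Real.rpow_nonneg (hv0 x) b) (memLp_rpow hu0 hu ha) (memLp_rpow hv0 hv hb)
  simpa only [rpow_rpow_one_div hu0 ha, rpow_rpow_one_div hv0 hb, one_div_one_div] using holder

theorem convexOn_log_integral_rpow {f : α → ℝ} (hf : 0 ≤ f)
    (hint : ∀ t : ℝ, 0 ≤ t → Integrable (fun x => f x ^ t) μ)
    (hpos : ∀ t : ℝ, 0 ≤ t → 0 < ∫ x, f x ^ t ∂μ) :
    ConvexOn ℝ (Ici 0) fun t : ℝ => Real.log (∫ x, f x ^ t ∂μ) := by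
  refine convexOn_iff_forall_pos.2 ⟨convex_Ici 0, fun s hs t ht a b ha hb hab => ?_⟩
  rw [mem_Ici] at hs ht
  have hsplit : ∀ x, f x ^ (a • s + b • t) = (f x ^ s) ^ a * (f x ^ t) ^ b := fun x => by
    rw [smul_eq_mul, smul_eq_mul, Real.rpow_add_of_nonneg (hf x) (by positivity) (by positivity),
      mul_comm a, mul_comm b, Real.rpow_mul (hf x), Real.rpow_mul (hf x)]
  have holder : ∫ x, f x ^ (a • s + b • t) ∂μ ≤
      (∫ x, f x ^ s ∂μ) ^ a * (∫ x, f x ^ t ∂μ) ^ b := by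
    simp only [hsplit]
    exact integral_rpow_mul_rpow_le (fun x => Real.rpow_nonneg (hf x) s)
      (fun x => Real.rpow_nonneg (hf x) t) (hint s hs) (hint t ht) ha hb hab
  have hs0 := Real.rpow_pos_of_pos (hpos s hs) a
  have ht0 := Real.rpow_pos_of_pos (hpos t ht) b
  calc Real.log (∫ x, f x ^ (a • s + b • t) ∂μ)
      ≤ Real.log ((∫ x, f x ^ s ∂μ) ^ a * (∫ x, f x ^ t ∂μ) ^ b) :=
        Real.log_le_log (hpos _ (by simp only [smul_eq_mul]; positivity)) holder
    _ = a • Real.log (∫ x, f x ^ s ∂μ) + b • Real.log (∫ x, f x ^ t ∂μ) := by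
        rw [Real.log_mul hs0.ne' ht0.ne', Real.log_rpow (hpos s hs), Real.log_rpow (hpos t ht)]
        rfl

end LogConvexity

section GaussianDensity

lemma integral_pow_mul_exp_neg_sq_mul_rpow {n : ℕ} (hn : 0 < n) {r : ℝ} (hr : -(n : ℝ) < r) :
    ∫ y in Ioi (0 : ℝ), y ^ (n - 1) * (Real.exp (-y ^ 2 / 2) * y ^ r) =
      2 ^ (n / 2 : ℝ) / 2 * (2 ^ (r / 2) * Real.Gamma ((n + r) / 2)) := by
  have h := integral_rpow_mul_exp_neg_mul_rpow (p := 2) (q := n - 1 + r) (b := 1 / 2)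
    two_pos (by linarith) (by norm_num)
  have hexp : (n - 1 + r + 1) / 2 = n / 2 + r / 2 := by ring
  rw [neg_div, hexp, one_div, Real.inv_rpow zero_le_two, Real.rpow_neg zero_le_two, inv_inv,
    Real.rpow_add two_pos] at h
  rw [add_div]
  convert h using 1
  · refine setIntegral_congr_fun measurableSet_Ioi fun y hy => ?_
    simp only [Real.rpow_add hy, ← Nat.cast_pred hn, Real.rpow_natCast, Real.rpow_two]
    ring_nf
  · ring

variable {E : Type*} [NormedAddCommGroup E] [InnerProductSpace ℝ E]

/-- The density of `stdGaussian E` with respect to Lebesgue measure. -/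
noncomputable def gaussianDensity (x : E) : ℝ :=
  (2 * Real.pi) ^ (-(finrank ℝ E : ℝ) / 2) * Real.exp (-‖x‖ ^ 2 / 2)

lemma gaussianDensity_pos (x : E) : 0 < gaussianDensity x := by
  unfold gaussianDensity; positivity

lemma hasLineDerivAt_gaussianDensity (x v : E) :
    HasLineDerivAt ℝ gaussianDensity (-(gaussianDensity x * ⟪v, x⟫)) x v := by
  have h := ((hasStrictFDerivAt_norm_sq x).hasFDerivAt.neg.mul_const (1 / 2)).exp.const_mul
    ((2 * Real.pi) ^ (-(finrank ℝ E : ℝ) / 2)) |>.hasLineDerivAt v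
  convert h using 1
  · ext y; simp [gaussianDensity, div_eq_mul_inv]
  · simp [gaussianDensity, real_inner_comm, div_eq_mul_inv]; ring

variable [MeasurableSpace E] [BorelSpace E]

lemma measurable_gaussianDensity : Measurable (gaussianDensity (E := E)) := by
  unfold gaussianDensity; fun_prop

variable [FiniteDimensional ℝ E]

lemma integrable_gaussianDensity : Integrable (gaussianDensity (E := E)) := by
  have h := (GaussianFourier.integrable_cexp_neg_mul_sq_norm_add (b := 1 / 2) (V := E)
    (by norm_num) 0 0).re.const_mul ((2 * Real.pi) ^ (-(finrank ℝ E : ℝ) / 2))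
  refine h.congr (.of_forall fun x => ?_)
  have hexp : Complex.exp (-(1 / 2) * (‖x‖ : ℂ) ^ 2 + 0 * ((inner ℝ 0 x : ℝ) : ℂ)) =
      (Real.exp (-‖x‖ ^ 2 / 2) : ℝ) := by
    push_cast; congr 1; ring
  simp only [gaussianDensity, hexp, RCLike.re_eq_complex_re, Complex.ofReal_re]

lemma charFun_withDensity_gaussianDensity (t : E) :
    charFun (volume.withDensity fun x : E => ENNReal.ofReal (gaussianDensity x)) t =
      Complex.exp (-‖t‖ ^ 2 / 2) := by
  have hπ : (Real.pi / (1 / 2) : ℂ) = ((2 * Real.pi : ℝ) : ℂ) := by push_cast; ring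
  have hc : (((2 * Real.pi) ^ (-(finrank ℝ E : ℝ) / 2) : ℝ) : ℂ) *
      ((2 * Real.pi : ℝ) : ℂ) ^ ((finrank ℝ E : ℂ) / 2) = 1 := by
    rw [Complex.ofReal_cpow (by positivity), ← Complex.cpow_add _ _ (by simp [Real.pi_ne_zero])]
    push_cast
    rw [neg_div, neg_add_cancel, Complex.cpow_zero]
  have integrand : ∀ x : E, gaussianDensity x • Complex.exp (inner ℝ x t * Complex.I) =
      (((2 * Real.pi) ^ (-(finrank ℝ E : ℝ) / 2) : ℝ) : ℂ) *
        Complex.exp (-(1 / 2) * ‖x‖ ^ 2 + Complex.I * inner ℝ t x) := fun x => by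
    rw [gaussianDensity, Complex.real_smul, Complex.ofReal_mul, Complex.ofReal_exp, mul_assoc,
      ← Complex.exp_add, real_inner_comm]
    push_cast
    ring_nf
  rw [charFun_apply, integral_withDensity_eq_integral_toReal_smul
    measurable_gaussianDensity.ennreal_ofReal (by simp)]
  simp only [ENNReal.toReal_ofReal (gaussianDensity_pos _).le, integrand]
  rw [integral_const_mul, GaussianFourier.integral_cexp_neg_mul_sq_norm_add (by norm_num),
    hπ, ← mul_assoc, hc, one_mul, Complex.I_sq]
  ring_nf

theorem stdGaussian_eq_withDensity :
    stdGaussian E = volume.withDensity fun x => ENNReal.ofReal (gaussianDensity x) := by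
  have : IsFiniteMeasure (volume.withDensity fun x : E => ENNReal.ofReal (gaussianDensity x)) :=
    isFiniteMeasure_withDensity_ofReal integrable_gaussianDensity.2
  refine Measure.ext_of_charFun (funext fun t => ?_)
  rw [charFun_stdGaussian, charFun_withDensity_gaussianDensity]

lemma integral_stdGaussian (f : E → ℝ) :
    ∫ x, f x ∂stdGaussian E = ∫ x, gaussianDensity x * f x := by
  rw [stdGaussian_eq_withDensity, integral_withDensity_eq_integral_toReal_smul
    measurable_gaussianDensity.ennreal_ofReal (by simp)]
  simp only [ENNReal.toReal_ofReal (gaussianDensity_pos _).le, smul_eq_mul]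

lemma integrable_stdGaussian_iff {f : E → ℝ} :
    Integrable f (stdGaussian E) ↔ Integrable fun x => gaussianDensity x * f x := by
  rw [stdGaussian_eq_withDensity, integrable_withDensity_iff_integrable_smul'
    measurable_gaussianDensity.ennreal_ofReal (by simp)]
  simp only [ENNReal.toReal_ofReal (gaussianDensity_pos _).le, smul_eq_mul]

instance isOpenPosMeasure_stdGaussian : (stdGaussian E).IsOpenPosMeasure := by
  rw [stdGaussian_eq_withDensity]
  refine (withDensity_absolutelyContinuous'
    measurable_gaussianDensity.ennreal_ofReal.aemeasurable ?_).isOpenPosMeasure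
  exact .of_forall fun x => (ENNReal.ofReal_pos.2 (gaussianDensity_pos x)).ne'

theorem integral_lineDeriv_stdGaussian {f f' : E → ℝ} {v : E}
    (hf : ∀ x, HasLineDerivAt ℝ f (f' x) x v) (hf_int : Integrable f (stdGaussian E))
    (hf'_int : Integrable f' (stdGaussian E))
    (hvf_int : Integrable (fun x => ⟪v, x⟫ * f x) (stdGaussian E)) :
    ∫ x, f' x ∂stdGaussian E = ∫ x, ⟪v, x⟫ * f x ∂stdGaussian E := by
  rw [integrable_stdGaussian_iff] at hf_int hf'_int hvf_int
  have parts := integral_bilinear_hasLineDerivAt_right_eq_neg_left_of_integrable (v := v)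
    (μ := (volume : Measure E)) (f := gaussianDensity) (g := f) (g' := f')
    (f' := fun x => -(gaussianDensity x * ⟪v, x⟫)) (B := ContinuousLinearMap.mul ℝ ℝ)
    (by simpa [mul_assoc] using hvf_int.neg) (by simpa using hf'_int) (by simpa using hf_int)
    (fun x _ => hasLineDerivAt_gaussianDensity x v) (fun x _ => hf x)
  rw [integral_stdGaussian, integral_stdGaussian]
  simpa [integral_neg, mul_assoc] using parts

theorem integral_norm_rpow_stdGaussian [Nontrivial E] {s : ℝ} (hs : -(finrank ℝ E : ℝ) < s) :
    ∫ x, ‖x‖ ^ s ∂stdGaussian E =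
      2 ^ (s / 2) * Real.Gamma ((finrank ℝ E + s) / 2) / Real.Gamma (finrank ℝ E / 2) := by
  have hn : 0 < finrank ℝ E := finrank_pos
  obtain ⟨c, hc⟩ : ∃ c : ℝ, ∀ r : ℝ, -(finrank ℝ E : ℝ) < r →
      ∫ x, ‖x‖ ^ r ∂stdGaussian E = c * (2 ^ (r / 2) * Real.Gamma ((finrank ℝ E + r) / 2)) := by
    refine ⟨(2 * Real.pi) ^ (-(finrank ℝ E : ℝ) / 2) * (finrank ℝ E *
      (volume.real (Metric.ball (0 : E) 1) * (2 ^ (finrank ℝ E / 2 : ℝ) / 2))), fun r hr => ?_⟩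
    simp only [integral_stdGaussian, gaussianDensity, mul_assoc]
    rw [integral_const_mul, integral_fun_norm_addHaar volume
      fun y => Real.exp (-y ^ 2 / 2) * y ^ r]
    simp only [smul_eq_mul, integral_pow_mul_exp_neg_sq_mul_rpow hn hr, nsmul_eq_mul]
  have hc0 : 1 = c * Real.Gamma (finrank ℝ E / 2) := by
    simpa using hc 0 (by simpa using hn)
  rw [hc s hs, eq_div_iff (Real.Gamma_pos_of_pos (by positivity)).ne']
  linear_combination -(2 ^ (s / 2) * Real.Gamma ((finrank ℝ E + s) / 2)) * hc0

end GaussianDensity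

section RotationInvariance

variable {E : Type*} [NormedAddCommGroup E] [InnerProductSpace ℝ E] [MeasurableSpace E]

/-- Invariance of a measure under all linear isometries of the space. -/
def IsRotationInvariant (μ : Measure E) : Prop :=
  ∀ R : E ≃ₗᵢ[ℝ] E, μ.map R = μ

variable [BorelSpace E] {μ ν : Measure E}

lemma isRotationInvariant_map_subtypeVal {ω : Measure (Metric.sphere (0 : E) 1)}
    (hω : ∀ R : E ≃ₗᵢ[ℝ] E, ω.map (fun x => (⟨R x.1, mem_sphere_zero_iff_norm.mpr
      (by rw [R.norm_map]; exact mem_sphere_zero_iff_norm.mp x.2)⟩ : Metric.sphere (0 : E) 1)) =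
        ω) :
    IsRotationInvariant (ω.map Subtype.val) := fun R => by
  conv_rhs => rw [← hω R]
  rw [Measure.map_map R.continuous.measurable measurable_subtype_coe,
    Measure.map_map measurable_subtype_coe (by fun_prop)]
  rfl

lemma IsRotationInvariant.charFun_eq_of_norm_eq (hμ : IsRotationInvariant μ) {s t : E}
    (hst : ‖s‖ = ‖t‖) : charFun μ s = charFun μ t := by
  set R := (ℝ ∙ (s - t))ᗮ.reflection
  have hR : R s = t := Submodule.reflection_sub hst
  calc charFun μ s = ∫ x, Complex.exp (⟪R x, R s⟫ * Complex.I) ∂μ := by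
        simp only [charFun_apply, R.inner_map_map]
    _ = ∫ x, Complex.exp (⟪x, t⟫ * Complex.I) ∂μ.map R := by
        rw [hR]
        exact (R.toHomeomorph.measurableEmbedding.integral_map
          fun x => Complex.exp (⟪x, t⟫ * Complex.I)).symm
    _ = charFun μ t := by rw [hμ R, charFun_apply]

variable [FiniteDimensional ℝ E]

lemma isRotationInvariant_stdGaussian : IsRotationInvariant (stdGaussian E) :=
  fun R => stdGaussian_map R

lemma IsRotationInvariant.charFun_map_norm_smul_prod [IsFiniteMeasure μ] [IsFiniteMeasure ν]
    (hν : IsRotationInvariant ν) (t : E) :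
    charFun ((μ.prod ν).map fun p => ‖p.1‖ • p.2) t =
      ∫ x, ∫ y, Complex.exp ((‖t‖ * ⟪x, y⟫ : ℝ) * Complex.I) ∂ν ∂μ := by
  have hmeas : Measurable fun p : E × E => ‖p.1‖ • p.2 := by fun_prop
  have hint : Integrable (fun p : E × E => Complex.exp ((⟪‖p.1‖ • p.2, t⟫ : ℝ) * Complex.I))
      (μ.prod ν) := by
    refine Integrable.of_bound (by fun_prop) 1 (.of_forall fun p => ?_)
    rw [Complex.norm_exp_ofReal_mul_I]
  rw [charFun_apply, integral_map hmeas.aemeasurable (by fun_prop), integral_prod _ hint]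
  refine integral_congr_ae (.of_forall fun x => ?_)
  have h := hν.charFun_eq_of_norm_eq (s := ‖x‖ • t) (t := ‖t‖ • x)
    (by simp [norm_smul, mul_comm])
  rw [charFun_apply, charFun_apply] at h
  simpa only [real_inner_smul_left, real_inner_smul_right, real_inner_comm x] using h

/- Both characteristic functions at `t` equal that of `⟪x, y⟫` at `‖t‖`, which is symmetric in `x`
and `y`. -/
theorem map_norm_smul_prod_comm [IsFiniteMeasure μ] [IsFiniteMeasure ν]
    (hμ : IsRotationInvariant μ) (hν : IsRotationInvariant ν) :
    (μ.prod ν).map (fun p => ‖p.1‖ • p.2) = (μ.prod ν).map fun p => ‖p.2‖ • p.1 := by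
  have hswap : (μ.prod ν).map (fun p => ‖p.2‖ • p.1) = (ν.prod μ).map fun p => ‖p.1‖ • p.2 := by
    rw [← Measure.prod_swap, Measure.map_map (by fun_prop) measurable_swap]
    rfl
  refine Measure.ext_of_charFun (funext fun t => ?_)
  rw [hswap, hν.charFun_map_norm_smul_prod, hμ.charFun_map_norm_smul_prod,
    integral_integral_swap]
  · simp only [real_inner_comm]
  · refine Integrable.of_bound (by unfold Function.uncurry; fun_prop) 1 (.of_forall fun p => ?_)
    rw [Function.uncurry, Complex.norm_exp_ofReal_mul_I]

theorem IsRotationInvariant.map_norm_smul_prod_eq [IsFiniteMeasure μ] [IsProbabilityMeasure ν]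
    (hμ : IsRotationInvariant μ) (hν : IsRotationInvariant ν) (hν1 : ∀ᵐ y ∂ν, ‖y‖ = 1) :
    (μ.prod ν).map (fun p => ‖p.1‖ • p.2) = μ := by
  have hfst : (fun p : E × E => ‖p.2‖ • p.1) =ᵐ[μ.prod ν] Prod.fst := by
    filter_upwards [Measure.quasiMeasurePreserving_snd.ae hν1] with p hp
    rw [hp, one_smul]
  rw [map_norm_smul_prod_comm hμ hν, Measure.map_congr hfst, Measure.map_fst_prod, measure_univ,
    one_smul]

theorem IsRotationInvariant.integral_eq_mul_of_homogeneous [IsFiniteMeasure μ]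
    [IsProbabilityMeasure ν] (hμ : IsRotationInvariant μ) (hν : IsRotationInvariant ν)
    (hν1 : ∀ᵐ y ∂ν, ‖y‖ = 1) {f : E → ℝ} (hf : Measurable f) {s : ℝ}
    (hfs : ∀ r x, 0 ≤ r → f (r • x) = r ^ s * f x) :
    ∫ x, f x ∂μ = (∫ x, ‖x‖ ^ s ∂μ) * ∫ y, f y ∂ν := by
  calc ∫ x, f x ∂μ = ∫ p : E × E, f (‖p.1‖ • p.2) ∂μ.prod ν := by
        conv_lhs => rw [← hμ.map_norm_smul_prod_eq hν hν1]
        exact integral_map (by fun_prop) hf.aestronglyMeasurable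
    _ = ∫ p : E × E, ‖p.1‖ ^ s * f p.2 ∂μ.prod ν := by simp only [hfs _ _ (norm_nonneg _)]
    _ = (∫ x, ‖x‖ ^ s ∂μ) * ∫ y, f y ∂ν := integral_prod_mul (fun x => ‖x‖ ^ s) f

theorem integral_stdGaussian_eq_mul_of_homogeneous [Nontrivial E] [IsProbabilityMeasure ν]
    (hν : IsRotationInvariant ν) (hν1 : ∀ᵐ y ∂ν, ‖y‖ = 1) {f : E → ℝ} (hf : Measurable f) {s : ℝ}
    (hs : -(finrank ℝ E : ℝ) < s) (hfs : ∀ r x, 0 ≤ r → f (r • x) = r ^ s * f x) :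
    ∫ x, f x ∂stdGaussian E =
      2 ^ (s / 2) * Real.Gamma ((finrank ℝ E + s) / 2) / Real.Gamma (finrank ℝ E / 2) *
        ∫ y, f y ∂ν := by
  rw [isRotationInvariant_stdGaussian.integral_eq_mul_of_homogeneous hν hν1 hf hfs,
    integral_norm_rpow_stdGaussian hs]

end RotationInvariance

section GaussianPolynomials

open MvPolynomial

variable {ι : Type*}

lemma continuous_eval_ofLp (p : MvPolynomial ι ℝ) :
    Continuous fun x : EuclideanSpace ℝ ι => eval x.ofLp p :=
  (continuous_eval p).comp (PiLp.continuous_ofLp 2 _)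

variable [Finite ι] (μ : Measure (EuclideanSpace ℝ ι)) [IsGaussian μ]

lemma memLp_eval_of_isGaussian (p : MvPolynomial ι ℝ) {r : ENNReal} (hr : r ≠ ⊤) :
    MemLp (fun x => eval x.ofLp p) r μ := by
  have := Fintype.ofFinite ι
  induction p using MvPolynomial.induction_on generalizing r with
  | C a => simpa only [eval_C] using memLp_const a
  | add p q hp hq => simpa only [map_add] using! (hp hr).add (hq hr)
  | mul_X p i hp =>
    have hcoord : MemLp (fun x : EuclideanSpace ℝ ι => x.ofLp i) (2 * r) μ :=
      (EuclideanSpace.proj (𝕜 := ℝ) i).comp_memLp' (IsGaussian.memLp_id μ (2 * r) (by finiteness))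
    have : ENNReal.HolderTriple (2 * r) (2 * r) r :=
      ⟨by rw [ENNReal.mul_inv (by simp) (by simp), ← add_mul, ENNReal.inv_two_add_inv_two,
        one_mul]⟩
    simpa only [map_mul, eval_X] using hcoord.mul' (hp (r := 2 * r) (by finiteness))

lemma integrable_eval_mul_abs_eval_rpow (p q : MvPolynomial ι ℝ) {a : ℝ} (ha : 0 ≤ a) :
    Integrable (fun x => eval x.ofLp p * |eval x.ofLp q| ^ a) μ := by
  have hq : MemLp (fun x => |eval x.ofLp q| ^ a) 2 μ := by
    rcases ha.eq_or_lt with rfl | ha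
    · simpa only [Real.rpow_zero] using memLp_const 1
    · have h := (memLp_eval_of_isGaussian μ q (r := 2 * ENNReal.ofReal a)
        (by finiteness)).norm_rpow_div (ENNReal.ofReal a)
      rwa [ENNReal.toReal_ofReal ha.le, ENNReal.mul_div_cancel_right
        (ENNReal.ofReal_pos.2 ha).ne' ENNReal.ofReal_ne_top] at h
  exact (memLp_eval_of_isGaussian μ p (r := 2) (by finiteness)).integrable_mul hq

lemma integrable_eval_mul_sq_rpow (p δ : MvPolynomial ι ℝ) {a : ℝ} (ha : 0 ≤ a) :
    Integrable (fun x => eval x.ofLp p * (eval x.ofLp δ ^ 2) ^ a) μ := by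
  refine (integrable_eval_mul_abs_eval_rpow μ p (δ ^ 2) ha).congr (.of_forall fun x => ?_)
  simp only [map_pow, abs_pow, sq_abs]

lemma integrable_eval_mul_eval_rpow (p : MvPolynomial ι ℝ) {q : MvPolynomial ι ℝ} {ε : ℝ}
    (hε : 0 < ε) (hq : ∀ x, ε ≤ eval x q) (a : ℝ) :
    Integrable (fun x => eval x.ofLp p * eval x.ofLp q ^ a) μ := by
  have hpos : ∀ x, 0 < eval x q := fun x => hε.trans_le (hq x)
  rcases le_total 0 a with ha | ha
  · simpa only [abs_of_pos (hpos _)] using integrable_eval_mul_abs_eval_rpow μ p q ha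
  · refine ((memLp_eval_of_isGaussian μ p ENNReal.one_ne_top).integrable le_rfl).mul_bdd
      (c := ε ^ a)
      (((continuous_eval_ofLp q).rpow_const fun x => .inl (hpos _).ne').aestronglyMeasurable)
      (.of_forall fun x => ?_)
    rw [Real.norm_of_nonneg (Real.rpow_nonneg (hpos _).le a)]
    exact Real.rpow_le_rpow_of_nonpos hε (hq _) ha

end GaussianPolynomials

section WeightedIntegrationByParts

open MvPolynomial

section OrnsteinUhlenbeck

variable {σ R : Type*} [Fintype σ] [CommRing R]

/-- The carré du champ `Γ(f, g) = ∑ i, ∂ᵢf ∂ᵢg`, as a derivation in `g`. -/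
noncomputable def carreDuChamp (f : MvPolynomial σ R) :
    Derivation R (MvPolynomial σ R) (MvPolynomial σ R) :=
  ∑ i, pderiv i f • pderiv i

/-- The Ornstein–Uhlenbeck operator `Δ - x · ∇`, symmetric with respect to the Gaussian measure. -/
noncomputable def ornsteinUhlenbeck (f : MvPolynomial σ R) : MvPolynomial σ R :=
  ∑ i, (pderiv i (pderiv i f) - X i * pderiv i f)

lemma carreDuChamp_apply (f g : MvPolynomial σ R) :
    carreDuChamp f g = ∑ i, pderiv i f * pderiv i g := by
  rw [carreDuChamp, ← Derivation.coeFnAddMonoidHom_apply, map_sum, Finset.sum_apply]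
  rfl

lemma sum_pderiv_mul_sub (f g : MvPolynomial σ R) :
    ∑ i, (pderiv i (g * pderiv i f) - X i * (g * pderiv i f)) =
      carreDuChamp f g + g * ornsteinUhlenbeck f := by
  rw [carreDuChamp_apply, ornsteinUhlenbeck, Finset.mul_sum, ← Finset.sum_add_distrib]
  refine Finset.sum_congr rfl fun i _ => ?_
  rw [Derivation.leibniz, smul_eq_mul, smul_eq_mul]
  ring

end OrnsteinUhlenbeck

variable {ι : Type*}

lemma hasLineDerivAt_eval [DecidableEq ι] (p : MvPolynomial ι ℝ) (x : EuclideanSpace ℝ ι) (i : ι) :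
    HasLineDerivAt ℝ (fun y : EuclideanSpace ℝ ι => eval y.ofLp p) (eval x.ofLp (pderiv i p)) x
      (EuclideanSpace.single i 1) := by
  unfold HasLineDerivAt
  induction p using MvPolynomial.induction_on with
  | C a => simpa using! hasDerivAt_const (0 : ℝ) a
  | add p q hp hq => simpa using! hp.add hq
  | mul_X p j hp =>
    have hX : HasDerivAt (fun t : ℝ => x.ofLp j + t * (Pi.single i 1 : ι → ℝ) j)
        ((Pi.single i 1 : ι → ℝ) j) 0 := by
      simpa using ((hasDerivAt_id (0 : ℝ)).mul_const ((Pi.single i 1 : ι → ℝ) j)).const_add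
        (x.ofLp j)
    convert! hp.mul hX using 1
    · ext t; simp
    · simp [pderiv_X, Pi.single_apply, eq_comm (a := j), apply_ite (eval x.ofLp)]; ring

variable [Fintype ι] {q δ : MvPolynomial ι ℝ} {ε κ : ℝ}

lemma integral_pderiv_mul_rpow_stdGaussian (u : MvPolynomial ι ℝ) (hε : 0 < ε)
    (hq : ∀ x, ε ≤ eval x q) (i : ι) :
    ∫ x, (eval x.ofLp (pderiv i u - X i * u) * eval x.ofLp q ^ κ +
      κ * (eval x.ofLp (u * pderiv i q) * eval x.ofLp q ^ (κ - 1)))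
        ∂stdGaussian (EuclideanSpace ℝ ι) = 0 := by
  classical
  have hpos : ∀ x, 0 < eval x q := fun x => hε.trans_le (hq x)
  have int : ∀ (p : MvPolynomial ι ℝ) (a : ℝ), Integrable
      (fun x => eval x.ofLp p * eval x.ofLp q ^ a) (stdGaussian (EuclideanSpace ℝ ι)) :=
    fun p a => integrable_eval_mul_eval_rpow _ p hε hq a
  have hderiv : ∀ x : EuclideanSpace ℝ ι, HasLineDerivAt ℝ
      (fun y : EuclideanSpace ℝ ι => eval y.ofLp u * eval y.ofLp q ^ κ)
      (eval x.ofLp (pderiv i u) * eval x.ofLp q ^ κ +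
        κ * (eval x.ofLp (u * pderiv i q) * eval x.ofLp q ^ (κ - 1))) x
      (EuclideanSpace.single i 1) := fun x => by
    have hu := hasLineDerivAt_eval u x i
    have hqx := hasLineDerivAt_eval q x i
    unfold HasLineDerivAt at hu hqx ⊢
    convert! hu.mul (hqx.rpow_const (p := κ) (.inl (hpos _).ne')) using 1
    simp only [zero_smul, add_zero, map_mul]
    ring
  have hinner : ∀ x : EuclideanSpace ℝ ι,
      ⟪EuclideanSpace.single i 1, x⟫ * (eval x.ofLp u * eval x.ofLp q ^ κ) =
        eval x.ofLp (X i * u) * eval x.ofLp q ^ κ := fun x => by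
    simp [EuclideanSpace.inner_single_left, mul_assoc]
  have hderiv_int : Integrable (fun x => eval x.ofLp (pderiv i u) * eval x.ofLp q ^ κ +
      κ * (eval x.ofLp (u * pderiv i q) * eval x.ofLp q ^ (κ - 1)))
      (stdGaussian (EuclideanSpace ℝ ι)) :=
    (int (pderiv i u) κ).add ((int (u * pderiv i q) (κ - 1)).const_mul κ)
  have hstein := integral_lineDeriv_stdGaussian hderiv (int u κ) hderiv_int
    (by simpa only [hinner] using int (X i * u) κ)
  simp only [hinner] at hstein
  rw [← sub_eq_zero, ← integral_sub hderiv_int (int _ κ)] at hstein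
  simpa only [map_sub, sub_mul, add_sub_right_comm] using hstein

lemma integral_carreDuChamp_mul_rpow_stdGaussian (f g : MvPolynomial ι ℝ) (hε : 0 < ε)
    (hq : ∀ x, ε ≤ eval x q) :
    ∫ x, (eval x.ofLp (carreDuChamp f g + g * ornsteinUhlenbeck f) * eval x.ofLp q ^ κ +
      κ * (eval x.ofLp (g * carreDuChamp f q) * eval x.ofLp q ^ (κ - 1)))
        ∂stdGaussian (EuclideanSpace ℝ ι) = 0 := by
  have int : ∀ (p : MvPolynomial ι ℝ) (a : ℝ), Integrable
      (fun x => eval x.ofLp p * eval x.ofLp q ^ a) (stdGaussian (EuclideanSpace ℝ ι)) :=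
    fun p a => integrable_eval_mul_eval_rpow _ p hε hq a
  have h := Finset.sum_eq_zero fun i (_ : i ∈ Finset.univ) =>
    integral_pderiv_mul_rpow_stdGaussian (κ := κ) (g * pderiv i f) hε hq i
  rw [← integral_finsetSum _ fun i _ => by
    exact (int _ κ).add ((int _ (κ - 1)).const_mul κ)] at h
  simpa only [Finset.sum_add_distrib, ← Finset.mul_sum, ← Finset.sum_mul, ← map_sum,
    sum_pderiv_mul_sub, mul_assoc, ← carreDuChamp_apply] using h

lemma tendsto_mul_mul_add_rpow_sub_one {s : ℝ} (hs : 0 ≤ s) (κ : ℝ) :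
    Tendsto (fun ε => κ * (s * (s + ε) ^ (κ - 1))) (𝓝[>] 0) (𝓝 (κ * s ^ κ)) := by
  rcases hs.eq_or_lt with rfl | hs
  · rcases eq_or_ne κ 0 with rfl | hκ
    · simp
    · simp [Real.zero_rpow hκ]
  · have h : ContinuousAt (fun ε => κ * (s * (s + ε) ^ (κ - 1))) 0 := by
      fun_prop (disch := simpa using .inl hs.ne')
    have hlim : κ * (s * (s + 0) ^ (κ - 1)) = κ * s ^ κ := by
      rw [add_zero, Real.rpow_sub_one hs.ne', mul_div_cancel₀ _ hs.ne']
    exact hlim ▸ h.tendsto.mono_left nhdsWithin_le_nhds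

lemma mul_add_rpow_sub_one_le {s : ℝ} (hs : 0 ≤ s) (hκ : 0 ≤ κ) (hε : ε ∈ Ioc (0 : ℝ) 1) :
    s * (s + ε) ^ (κ - 1) ≤ (s + 1) ^ κ := by
  have hpos : 0 < s + ε := add_pos_of_nonneg_of_pos hs hε.1
  calc s * (s + ε) ^ (κ - 1) ≤ (s + ε) * (s + ε) ^ (κ - 1) := by
        gcongr; exact le_add_of_nonneg_right hε.1.le
    _ = (s + ε) ^ κ := by rw [Real.rpow_sub_one hpos.ne', mul_div_cancel₀ _ hpos.ne']
    _ ≤ (s + 1) ^ κ := by gcongr; exact hε.2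

lemma tendsto_integral_add_rpow {α : Type*} [MeasurableSpace α] {μ : Measure α} {s A B : α → ℝ}
    (hκ : 0 ≤ κ) (hs : ∀ x, 0 ≤ s x) (hs_meas : Measurable s) (hA : AEStronglyMeasurable A μ)
    (hB : AEStronglyMeasurable B μ) (hA_int : Integrable (fun x => A x * (s x + 1) ^ κ) μ)
    (hB_int : Integrable (fun x => B x * (s x + 1) ^ κ) μ) :
    Tendsto (fun ε => ∫ x, (A x * (s x + ε) ^ κ + B x * (κ * (s x * (s x + ε) ^ (κ - 1)))) ∂μ)
      (𝓝[>] 0) (𝓝 (∫ x, (A x * s x ^ κ + B x * (κ * s x ^ κ)) ∂μ)) := by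
  refine tendsto_integral_filter_of_dominated_convergence
    (fun x => ‖A x * (s x + 1) ^ κ‖ + κ * ‖B x * (s x + 1) ^ κ‖)
    (.of_forall fun ε => ?_) ?_ (hA_int.norm.add (hB_int.norm.const_mul κ))
    (.of_forall fun x => ?_)
  · have hpow : ∀ a : ℝ, AEStronglyMeasurable (fun x => (s x + ε) ^ a) μ :=
      fun a => ((hs_meas.add_const ε).pow_const a).aestronglyMeasurable
    exact (hA.mul (hpow κ)).add
      (hB.mul ((hs_meas.aestronglyMeasurable.mul (hpow (κ - 1))).const_mul κ))
  · filter_upwards [Ioc_mem_nhdsGT one_pos] with ε hε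
    refine .of_forall fun x => (norm_add_le _ _).trans (add_le_add ?_ ?_)
    · have := hs x
      have := hε.1.le
      rw [norm_mul, norm_mul, Real.norm_of_nonneg (by positivity : 0 ≤ (s x + ε) ^ κ),
        Real.norm_of_nonneg (by positivity : 0 ≤ (s x + 1) ^ κ)]
      gcongr
      exact hε.2
    · have := hs x
      have := hε.1.le
      rw [mul_left_comm, norm_mul, Real.norm_of_nonneg hκ, norm_mul, norm_mul (B x),
        Real.norm_of_nonneg (by positivity : 0 ≤ s x * (s x + ε) ^ (κ - 1)),
        Real.norm_of_nonneg (by positivity : 0 ≤ (s x + 1) ^ κ)]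
      gcongr
      exact mul_add_rpow_sub_one_le (hs x) hκ hε
  · have hpow : Tendsto (fun ε => (s x + ε) ^ κ) (𝓝[>] 0) (𝓝 (s x ^ κ)) := by
      have h : Continuous fun ε => (s x + ε) ^ κ := by fun_prop (disch := exact .inr hκ)
      simpa using (h.tendsto 0).mono_left nhdsWithin_le_nhds
    exact (hpow.const_mul (A x)).add
      ((tendsto_mul_mul_add_rpow_sub_one (hs x) κ).const_mul (B x))

/- The weight `(δ ^ 2) ^ κ` is not differentiable where `δ` vanishes if `κ` is small, so the
identity is obtained as the limit `ε → 0` of the one for `(δ ^ 2 + ε) ^ κ`. -/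
lemma integral_carreDuChamp_mul_sq_rpow_stdGaussian (hκ : 0 ≤ κ) {f h : MvPolynomial ι ℝ}
    (hf : carreDuChamp f δ = h * δ) (g : MvPolynomial ι ℝ) :
    ∫ x, (eval x.ofLp (carreDuChamp f g + g * ornsteinUhlenbeck f) * (eval x.ofLp δ ^ 2) ^ κ +
      2 * eval x.ofLp (g * h) * (κ * (eval x.ofLp δ ^ 2) ^ κ))
        ∂stdGaussian (EuclideanSpace ℝ ι) = 0 := by
  set A := carreDuChamp f g + g * ornsteinUhlenbeck f
  have hΓ : ∀ ε, carreDuChamp f (δ ^ 2 + C ε) = 2 * (h * δ ^ 2) := fun ε => by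
    rw [map_add, MvPolynomial.derivation_C, Derivation.leibniz_pow, hf]
    simp only [smul_eq_mul, nsmul_eq_mul]
    push_cast
    ring
  have h_approx : ∀ ε ∈ Ioc (0 : ℝ) 1,
      ∫ x, (eval x.ofLp A * (eval x.ofLp δ ^ 2 + ε) ^ κ +
        2 * eval x.ofLp (g * h) * (κ * (eval x.ofLp δ ^ 2 * (eval x.ofLp δ ^ 2 + ε) ^ (κ - 1))))
        ∂stdGaussian (EuclideanSpace ℝ ι) = 0 := fun ε hε => by
    rw [← integral_carreDuChamp_mul_rpow_stdGaussian (κ := κ) (q := δ ^ 2 + C ε) f g hε.1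
      fun x => by simpa using sq_nonneg (eval x δ)]
    refine integral_congr_ae (.of_forall fun x => ?_)
    simp only [hΓ, map_add, map_mul, map_pow, eval_C, map_ofNat, A]
    ring
  have h_int : ∀ p : MvPolynomial ι ℝ, Integrable
      (fun x => eval x.ofLp p * (eval x.ofLp δ ^ 2 + 1) ^ κ)
      (stdGaussian (EuclideanSpace ℝ ι)) := fun p => by
    refine (integrable_eval_mul_eval_rpow _ p (q := δ ^ 2 + 1) one_pos
      (fun x => by simpa using sq_nonneg (eval x δ)) κ).congr (.of_forall fun x => ?_)
    simp only [map_add, map_pow, map_one]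
  refine tendsto_nhds_unique (tendsto_integral_add_rpow hκ (fun x => sq_nonneg (eval x.ofLp δ))
    ((continuous_eval_ofLp δ).pow 2).measurable (continuous_eval_ofLp A).aestronglyMeasurable
    (continuous_const.mul (continuous_eval_ofLp (g * h))).aestronglyMeasurable (h_int A)
    (by simpa only [mul_assoc] using (h_int (g * h)).const_mul 2)) ?_
  exact tendsto_const_nhds.congr' (eventually_of_mem (Ioc_mem_nhdsGT one_pos)
    fun ε hε => (h_approx ε hε).symm)

/-- The functional `p ↦ ∫ p (δ²)^κ` against the standard Gaussian measure, that is, integration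
against the weight `|δ|^{2κ}`. -/
noncomputable def weightedIntegral (δ : MvPolynomial ι ℝ) (hκ : 0 ≤ κ) :
    MvPolynomial ι ℝ →ₗ[ℝ] ℝ where
  toFun p := ∫ x, eval x.ofLp p * (eval x.ofLp δ ^ 2) ^ κ ∂stdGaussian (EuclideanSpace ℝ ι)
  map_add' p q := by
    simp only [map_add, add_mul]
    exact integral_add (integrable_eval_mul_sq_rpow _ p δ hκ) (integrable_eval_mul_sq_rpow _ q δ hκ)
  map_smul' c p := by
    simp only [smul_eval, mul_assoc, integral_const_mul, RingHom.id_apply, smul_eq_mul]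

theorem weightedIntegral_carreDuChamp (hκ : 0 ≤ κ) {f h : MvPolynomial ι ℝ}
    (hf : carreDuChamp f δ = h * δ) (g : MvPolynomial ι ℝ) :
    weightedIntegral δ hκ (carreDuChamp f g + g * ornsteinUhlenbeck f + (2 * κ) • (g * h)) = 0 := by
  rw [← integral_carreDuChamp_mul_sq_rpow_stdGaussian hκ hf g]
  refine integral_congr_ae (.of_forall fun x => ?_)
  simp only [map_add, smul_eval]
  ring

end WeightedIntegrationByParts

section DerivationEigenvectors

variable {R A : Type*} [CommSemiring R] [CommSemiring A] [Algebra R A]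
  {D : Derivation R A A} {a b : A} {c d : R}

lemma derivation_mul_eq_smul (ha : D a = c • a) (hb : D b = d • b) :
    D (a * b) = (c + d) • (a * b) := by
  rw [D.leibniz, ha, hb, smul_eq_mul, smul_eq_mul, mul_smul_comm, mul_smul_comm, mul_comm b,
    ← add_smul, add_comm]

lemma derivation_pow_eq_smul (ha : D a = c • a) (n : ℕ) : D (a ^ n) = (n * c) • a ^ n := by
  induction n with
  | zero => simp
  | succ n ih => rw [pow_succ, derivation_mul_eq_smul ih ha, Nat.cast_succ, add_mul, one_mul]

end DerivationEigenvectors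

namespace D3

open MvPolynomial

/-- The quadratic basic invariant of the reflection group `D₃`, which acts on the last three
coordinates of `ℝ⁴` by permutations and even sign changes. -/
noncomputable def I₂ : MvPolynomial (Fin 4) ℝ := X 1 ^ 2 + X 2 ^ 2 + X 3 ^ 2

/-- The cubic basic invariant of `D₃`. -/
noncomputable def I₃ : MvPolynomial (Fin 4) ℝ := X 1 * X 2 * X 3

/-- The quartic basic invariant of `D₃`. -/
noncomputable def I₄ : MvPolynomial (Fin 4) ℝ :=
  X 1 ^ 2 * X 2 ^ 2 + X 1 ^ 2 * X 3 ^ 2 + X 2 ^ 2 * X 3 ^ 2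

/-- The product of the positive roots of `D₃`. -/
noncomputable def rootProduct : MvPolynomial (Fin 4) ℝ :=
  (X 1 ^ 2 - X 2 ^ 2) * (X 1 ^ 2 - X 3 ^ 2) * (X 2 ^ 2 - X 3 ^ 2)

-- The discriminant of the cubic with roots `x₁²`, `x₂²`, `x₃²`.
lemma rootProduct_sq : rootProduct ^ 2 =
    I₂ ^ 2 * I₄ ^ 2 - (4 : ℝ) • I₄ ^ 3 - (4 : ℝ) • (I₂ ^ 3 * I₃ ^ 2) +
      (18 : ℝ) • (I₂ * I₃ ^ 2 * I₄) - (27 : ℝ) • I₃ ^ 4 := by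
  simp only [rootProduct, I₂, I₃, I₄, smul_eq_C_mul, map_ofNat]
  ring

lemma carreDuChamp_I₂_I₂ : carreDuChamp I₂ I₂ = (4 : ℝ) • I₂ := by
  simp only [carreDuChamp_apply, I₂, Fin.sum_univ_four, sq, map_add, Derivation.leibniz,
    smul_eq_mul, pderiv_X, Pi.single_apply, Fin.reduceEq, ite_true, ite_false, smul_eq_C_mul,
    map_ofNat]
  ring

lemma carreDuChamp_I₂_I₃ : carreDuChamp I₂ I₃ = (6 : ℝ) • I₃ := by
  simp only [carreDuChamp_apply, I₂, I₃, Fin.sum_univ_four, sq, map_add, Derivation.leibniz,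
    smul_eq_mul, pderiv_X, Pi.single_apply, Fin.reduceEq, ite_true, ite_false, smul_eq_C_mul,
    map_ofNat]
  ring

lemma carreDuChamp_I₂_I₄ : carreDuChamp I₂ I₄ = (8 : ℝ) • I₄ := by
  simp only [carreDuChamp_apply, I₂, I₄, Fin.sum_univ_four, sq, map_add, Derivation.leibniz,
    smul_eq_mul, pderiv_X, Pi.single_apply, Fin.reduceEq, ite_true, ite_false, smul_eq_C_mul,
    map_ofNat]
  ring

lemma carreDuChamp_I₃_I₃ : carreDuChamp I₃ I₃ = I₄ := by
  simp only [carreDuChamp_apply, I₃, I₄, Fin.sum_univ_four, sq, Derivation.leibniz,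
    smul_eq_mul, pderiv_X, Pi.single_apply, Fin.reduceEq, ite_true, ite_false]
  ring

lemma carreDuChamp_I₃_I₄ : carreDuChamp I₃ I₄ = (4 : ℝ) • (I₂ * I₃) := by
  simp only [carreDuChamp_apply, I₂, I₃, I₄, Fin.sum_univ_four, sq, map_add, Derivation.leibniz,
    smul_eq_mul, pderiv_X, Pi.single_apply, Fin.reduceEq, ite_true, ite_false, smul_eq_C_mul,
    map_ofNat]
  ring

lemma carreDuChamp_I₄_I₄ : carreDuChamp I₄ I₄ = (4 : ℝ) • (I₂ * I₄) + (12 : ℝ) • I₃ ^ 2 := by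
  simp only [carreDuChamp_apply, I₂, I₃, I₄, Fin.sum_univ_four, sq, map_add, Derivation.leibniz,
    smul_eq_mul, pderiv_X, Pi.single_apply, Fin.reduceEq, ite_true, ite_false, smul_eq_C_mul,
    map_ofNat]
  ring

lemma carreDuChamp_I₂_rootProduct : carreDuChamp I₂ rootProduct = 12 * rootProduct := by
  simp only [carreDuChamp_apply, I₂, rootProduct, Fin.sum_univ_four, sq, map_add, map_sub,
    Derivation.leibniz, smul_eq_mul, pderiv_X, Pi.single_apply, Fin.reduceEq, ite_true, ite_false]
  ring

lemma carreDuChamp_I₃_rootProduct : carreDuChamp I₃ rootProduct = 0 * rootProduct := by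
  simp only [carreDuChamp_apply, I₃, rootProduct, Fin.sum_univ_four, sq, map_sub,
    Derivation.leibniz, smul_eq_mul, pderiv_X, Pi.single_apply, Fin.reduceEq, ite_true, ite_false]
  ring

lemma carreDuChamp_I₄_rootProduct : carreDuChamp I₄ rootProduct = 4 * I₂ * rootProduct := by
  simp only [carreDuChamp_apply, I₂, I₄, rootProduct, Fin.sum_univ_four, sq, map_add, map_sub,
    Derivation.leibniz, smul_eq_mul, pderiv_X, Pi.single_apply, Fin.reduceEq, ite_true, ite_false]
  ring

lemma ornsteinUhlenbeck_I₂ : ornsteinUhlenbeck I₂ = 6 - 2 * I₂ := by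
  simp only [ornsteinUhlenbeck, I₂, Fin.sum_univ_four, sq, map_add, Derivation.leibniz,
    smul_eq_mul, pderiv_X, Pi.single_apply, Fin.reduceEq, ite_true, ite_false, map_zero,
    Derivation.map_one_eq_zero]
  ring

lemma ornsteinUhlenbeck_I₃ : ornsteinUhlenbeck I₃ = -3 * I₃ := by
  simp only [ornsteinUhlenbeck, I₃, Fin.sum_univ_four, Derivation.leibniz, smul_eq_mul,
    pderiv_X, Pi.single_apply, Fin.reduceEq, ite_true, ite_false, map_add, map_zero,
    Derivation.map_one_eq_zero]
  ring

lemma ornsteinUhlenbeck_I₄ : ornsteinUhlenbeck I₄ = 4 * I₂ - 4 * I₄ := by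
  simp only [ornsteinUhlenbeck, I₂, I₄, Fin.sum_univ_four, sq, map_add, Derivation.leibniz,
    smul_eq_mul, pderiv_X, Pi.single_apply, Fin.reduceEq, ite_true, ite_false, map_zero,
    Derivation.map_one_eq_zero]
  ring

section Moments

variable {κ : ℝ} {hκ : 0 ≤ κ}

local notation "J" => weightedIntegral rootProduct hκ

lemma weightedIntegral_I₂_mul {g : MvPolynomial (Fin 4) ℝ} {k : ℝ}
    (hg : carreDuChamp I₂ g = (2 * k) • g) : J (I₂ * g) = (3 + 12 * κ + k) * J g := by
  have h := weightedIntegral_carreDuChamp hκ carreDuChamp_I₂_rootProduct g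
  have hsplit : carreDuChamp I₂ g + g * ornsteinUhlenbeck I₂ + (2 * κ) • (g * 12) =
      (2 * (3 + 12 * κ + k)) • g - (2 : ℝ) • (I₂ * g) := by
    rw [hg, ornsteinUhlenbeck_I₂]
    simp only [smul_eq_C_mul, map_add, map_mul, map_ofNat]
    ring
  rw [hsplit, map_sub, map_smul, map_smul, smul_eq_mul, smul_eq_mul] at h
  linarith

lemma weightedIntegral_I₂_pow_succ_mul (a b c : ℕ) :
    J (I₂ ^ (a + 1) * I₃ ^ b * I₄ ^ c) =
      (3 + 12 * κ + (2 * a + 3 * b + 4 * c)) * J (I₂ ^ a * I₃ ^ b * I₄ ^ c) := by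
  have hΓ := derivation_mul_eq_smul (derivation_mul_eq_smul
    (derivation_pow_eq_smul carreDuChamp_I₂_I₂ a) (derivation_pow_eq_smul carreDuChamp_I₂_I₃ b))
    (derivation_pow_eq_smul carreDuChamp_I₂_I₄ c)
  rw [← weightedIntegral_I₂_mul (hΓ.trans (by ring_nf)), pow_succ']
  simp only [mul_assoc]

lemma weightedIntegral_I₃_mul (g : MvPolynomial (Fin 4) ℝ) :
    3 * J (I₃ * g) = J (carreDuChamp I₃ g) := by
  have h := weightedIntegral_carreDuChamp hκ carreDuChamp_I₃_rootProduct g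
  have hsplit : carreDuChamp I₃ g + g * ornsteinUhlenbeck I₃ + (2 * κ) • (g * 0) =
      carreDuChamp I₃ g - (3 : ℝ) • (I₃ * g) := by
    rw [ornsteinUhlenbeck_I₃]
    simp only [smul_eq_C_mul, map_ofNat]
    ring
  rw [hsplit, map_sub, map_smul, smul_eq_mul] at h
  linarith

lemma weightedIntegral_I₄_mul (g : MvPolynomial (Fin 4) ℝ) :
    4 * J (I₄ * g) = J (carreDuChamp I₄ g) + (4 + 8 * κ) * J (I₂ * g) := by
  have h := weightedIntegral_carreDuChamp hκ carreDuChamp_I₄_rootProduct g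
  have hsplit : carreDuChamp I₄ g + g * ornsteinUhlenbeck I₄ + (2 * κ) • (g * (4 * I₂)) =
      carreDuChamp I₄ g + (4 + 8 * κ) • (I₂ * g) - (4 : ℝ) • (I₄ * g) := by
    rw [ornsteinUhlenbeck_I₄]
    simp only [smul_eq_C_mul, map_add, map_mul, map_ofNat]
    ring
  rw [hsplit, map_sub, map_add, map_smul, map_smul, smul_eq_mul, smul_eq_mul] at h
  linarith

lemma weightedIntegral_I₃_sq : 3 * J (I₃ ^ 2) = J I₄ := by
  rw [sq, weightedIntegral_I₃_mul, carreDuChamp_I₃_I₃]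

lemma weightedIntegral_I₄ : J I₄ = (1 + 2 * κ) * (3 + 12 * κ) * J 1 := by
  have h₂ : J I₂ = (3 + 12 * κ) * J 1 := by
    simpa using weightedIntegral_I₂_pow_succ_mul (hκ := hκ) 0 0 0
  have h₄ := weightedIntegral_I₄_mul (hκ := hκ) 1
  rw [Derivation.map_one_eq_zero, map_zero, mul_one, mul_one, h₂] at h₄
  linarith

lemma weightedIntegral_I₄_sq :
    J (I₄ ^ 2) = (2 + 2 * κ) * (7 + 12 * κ) * J I₄ + 3 * J (I₃ ^ 2) := by
  have h₂ : J (I₂ * I₄) = (3 + 12 * κ + 4) * J I₄ := by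
    simpa using weightedIntegral_I₂_pow_succ_mul (hκ := hκ) 0 0 1
  have h₄ := weightedIntegral_I₄_mul (hκ := hκ) I₄
  simp only [carreDuChamp_I₄_I₄, map_add, map_smul, smul_eq_mul, h₂, ← sq] at h₄
  linarith

lemma weightedIntegral_I₃_sq_mul_I₄ :
    3 * J (I₃ ^ 2 * I₄) = J (I₄ ^ 2) + 4 * (9 + 12 * κ) * J (I₃ ^ 2) := by
  have h₂ : J (I₂ * I₃ ^ 2) = (3 + 12 * κ + 3 * 2) * J (I₃ ^ 2) := by
    simpa using weightedIntegral_I₂_pow_succ_mul (hκ := hκ) 0 2 0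
  have hΓ : carreDuChamp I₃ (I₃ * I₄) = (4 : ℝ) • (I₂ * I₃ ^ 2) + I₄ ^ 2 := by
    rw [Derivation.leibniz, carreDuChamp_I₃_I₃, carreDuChamp_I₃_I₄]
    simp only [smul_eq_mul, smul_eq_C_mul]
    ring
  rw [sq, mul_assoc, weightedIntegral_I₃_mul, hΓ, map_add, map_smul, smul_eq_mul, h₂]
  ring_nf

lemma weightedIntegral_I₄_cube :
    J (I₄ ^ 3) = (3 + 2 * κ) * (11 + 12 * κ) * J (I₄ ^ 2) + 6 * J (I₃ ^ 2 * I₄) := by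
  have h₂ : J (I₂ * I₄ ^ 2) = (3 + 12 * κ + 4 * 2) * J (I₄ ^ 2) := by
    simpa using weightedIntegral_I₂_pow_succ_mul (hκ := hκ) 0 0 2
  have hΓ : carreDuChamp I₄ (I₄ ^ 2) = (8 : ℝ) • (I₂ * I₄ ^ 2) + (24 : ℝ) • (I₃ ^ 2 * I₄) := by
    rw [sq, Derivation.leibniz, carreDuChamp_I₄_I₄]
    simp only [smul_eq_mul, smul_eq_C_mul, map_ofNat]
    ring
  have h₄ := weightedIntegral_I₄_mul (hκ := hκ) (I₄ ^ 2)
  rw [hΓ, map_add, map_smul, map_smul, smul_eq_mul, smul_eq_mul, h₂, ← pow_succ'] at h₄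
  linarith

lemma weightedIntegral_I₃_pow_four : J (I₃ ^ 4) = J (I₃ ^ 2 * I₄) := by
  have hΓ : carreDuChamp I₃ (I₃ ^ 3) = (3 : ℝ) • (I₃ ^ 2 * I₄) := by
    rw [Derivation.leibniz_pow, carreDuChamp_I₃_I₃]
    simp only [smul_eq_mul, smul_eq_C_mul, nsmul_eq_mul, map_ofNat]
    norm_num
  have h₃ := weightedIntegral_I₃_mul (hκ := hκ) (I₃ ^ 3)
  rw [hΓ, map_smul, smul_eq_mul, ← pow_succ'] at h₃
  linarith

theorem weightedIntegral_rootProduct_sq :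
    J (rootProduct ^ 2) = 24 * (2 * κ + 1) * (3 * κ + 1) * (3 * κ + 2) * (4 * κ + 1) *
      (4 * κ + 2) * (4 * κ + 3) * J 1 := by
  have h₁ : J (I₂ ^ 2 * I₄ ^ 2) = (3 + 12 * κ + (2 + 4 * 2)) * J (I₂ * I₄ ^ 2) := by
    simpa using weightedIntegral_I₂_pow_succ_mul (hκ := hκ) 1 0 2
  have h₂ : J (I₂ * I₄ ^ 2) = (3 + 12 * κ + 4 * 2) * J (I₄ ^ 2) := by
    simpa using weightedIntegral_I₂_pow_succ_mul (hκ := hκ) 0 0 2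
  have h₃ : J (I₂ ^ 3 * I₃ ^ 2) = (3 + 12 * κ + (2 * 2 + 3 * 2)) * J (I₂ ^ 2 * I₃ ^ 2) := by
    simpa using weightedIntegral_I₂_pow_succ_mul (hκ := hκ) 2 2 0
  have h₄ : J (I₂ ^ 2 * I₃ ^ 2) = (3 + 12 * κ + (2 + 3 * 2)) * J (I₂ * I₃ ^ 2) := by
    simpa using weightedIntegral_I₂_pow_succ_mul (hκ := hκ) 1 2 0
  have h₅ : J (I₂ * I₃ ^ 2) = (3 + 12 * κ + 3 * 2) * J (I₃ ^ 2) := by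
    simpa using weightedIntegral_I₂_pow_succ_mul (hκ := hκ) 0 2 0
  have h₆ : J (I₂ * I₃ ^ 2 * I₄) = (3 + 12 * κ + (3 * 2 + 4)) * J (I₃ ^ 2 * I₄) := by
    simpa using weightedIntegral_I₂_pow_succ_mul (hκ := hκ) 0 2 1
  have h₇ : J (I₃ ^ 2) = J I₄ / 3 := by linarith [weightedIntegral_I₃_sq (hκ := hκ)]
  have h₈ : J (I₃ ^ 2 * I₄) = (J (I₄ ^ 2) + 4 * (9 + 12 * κ) * J (I₃ ^ 2)) / 3 := by
    linarith [weightedIntegral_I₃_sq_mul_I₄ (hκ := hκ)]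
  simp only [rootProduct_sq, map_add, map_sub, map_smul, smul_eq_mul, h₁, h₂, h₃, h₄, h₅, h₆,
    weightedIntegral_I₄_cube, weightedIntegral_I₃_pow_four, h₈, weightedIntegral_I₄_sq, h₇,
    weightedIntegral_I₄]
  ring

end Moments

/-- The Gaussian moment `∫ ∏ |⟨α, x⟩| ^ (2κ) dγ(x)`, over the positive roots `α` of `D₃`. -/
noncomputable def mehtaIntegral (κ : ℝ) : ℝ :=
  ∫ x, (eval x.ofLp rootProduct ^ 2) ^ κ ∂stdGaussian (EuclideanSpace ℝ (Fin 4))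

variable {κ : ℝ}

lemma weightedIntegral_rootProduct_one (hκ : 0 ≤ κ) :
    weightedIntegral rootProduct hκ 1 = mehtaIntegral κ := by
  simp [weightedIntegral, mehtaIntegral]

lemma mehtaIntegral_zero : mehtaIntegral 0 = 1 := by
  simp [mehtaIntegral]

lemma mehtaIntegral_add_one (hκ : 0 ≤ κ) :
    mehtaIntegral (κ + 1) = 24 * (2 * κ + 1) * (3 * κ + 1) * (3 * κ + 2) * (4 * κ + 1) *
      (4 * κ + 2) * (4 * κ + 3) * mehtaIntegral κ := by
  rw [← weightedIntegral_rootProduct_one hκ, ← weightedIntegral_rootProduct_sq]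
  refine integral_congr_ae (.of_forall fun x => ?_)
  simp only [map_pow]
  rw [Real.rpow_add_one' (sq_nonneg _) (by positivity), mul_comm]

lemma integrable_rootProduct_sq_rpow (hκ : 0 ≤ κ) :
    Integrable (fun x => (eval x.ofLp rootProduct ^ 2) ^ κ)
      (stdGaussian (EuclideanSpace ℝ (Fin 4))) := by
  simpa using integrable_eval_mul_sq_rpow (stdGaussian _) 1 rootProduct hκ

lemma mehtaIntegral_pos (hκ : 0 ≤ κ) : 0 < mehtaIntegral κ := by
  have hcont : Continuous fun x : EuclideanSpace ℝ (Fin 4) =>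
      (eval x.ofLp rootProduct ^ 2) ^ κ :=
    ((continuous_eval_ofLp _).pow 2).rpow_const fun _ => .inr hκ
  have hne : eval !₂[(0 : ℝ), 0, 1, 2].ofLp rootProduct ≠ 0 := by
    simp [rootProduct]
    norm_num
  exact integral_pos_of_integrable_nonneg_nonzero hcont (integrable_rootProduct_sq_rpow hκ)
    (fun _ => by positivity) (Real.rpow_pos_of_pos (by positivity) κ).ne'

lemma convexOn_log_mehtaIntegral : ConvexOn ℝ (Ici 0) fun κ => Real.log (mehtaIntegral κ) :=
  convexOn_log_integral_rpow (fun _ => sq_nonneg _) (fun _ => integrable_rootProduct_sq_rpow)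
    fun _ => mehtaIntegral_pos

/-- The ratio of successive values of `Γ(1 + 2κ) Γ(1 + 3κ) Γ(1 + 4κ)`. -/
noncomputable def gammaRatio : Polynomial ℝ :=
  24 * (2 * .X + 1) * (3 * .X + 1) * (3 * .X + 2) * (4 * .X + 1) * (4 * .X + 2) * (4 * .X + 3) *
    (.X + 1) ^ 3

lemma Gamma_one_add_mul_add_one (hκ : 0 ≤ κ) (n : ℕ) :
    Real.Gamma (1 + n * (κ + 1)) =
      (∏ i ∈ Finset.range n, (1 + n * κ + i)) * Real.Gamma (1 + n * κ) := by
  rw [← Gamma_add_nat_eq_prod (by positivity)]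
  ring_nf

lemma prod_Gamma_add_one (hκ : 0 ≤ κ) :
    Real.Gamma (1 + 2 * (κ + 1)) * Real.Gamma (1 + 3 * (κ + 1)) * Real.Gamma (1 + 4 * (κ + 1)) =
      gammaRatio.eval κ *
        (Real.Gamma (1 + 2 * κ) * Real.Gamma (1 + 3 * κ) * Real.Gamma (1 + 4 * κ)) := by
  have h₂ := Gamma_one_add_mul_add_one hκ 2
  have h₃ := Gamma_one_add_mul_add_one hκ 3
  have h₄ := Gamma_one_add_mul_add_one hκ 4
  simp only [Nat.cast_ofNat, Finset.prod_range_succ, Finset.prod_range_zero, Nat.cast_zero,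
    Nat.cast_one] at h₂ h₃ h₄
  rw [h₂, h₃, h₄]
  simp [gammaRatio]
  ring

lemma mehtaIntegral_mul_Gamma_pow_add_one (hκ : 0 ≤ κ) :
    mehtaIntegral (κ + 1) * Real.Gamma (1 + (κ + 1)) ^ 3 =
      gammaRatio.eval κ * (mehtaIntegral κ * Real.Gamma (1 + κ) ^ 3) := by
  rw [mehtaIntegral_add_one hκ, ← add_assoc, Real.Gamma_add_one (by positivity)]
  simp [gammaRatio]
  ring

lemma convexOn_log_mehtaIntegral_mul_Gamma_pow :
    ConvexOn ℝ (Ici 0) fun κ => Real.log (mehtaIntegral κ * Real.Gamma (1 + κ) ^ 3) := by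
  refine (convexOn_log_mehtaIntegral.add
    ((convexOn_log_Gamma_one_add_mul zero_le_one).smul zero_le_three)).congr fun κ hκ => ?_
  have hΓ : 0 < Real.Gamma (1 + κ) := Real.Gamma_pos_of_pos (by linarith [mem_Ici.1 hκ])
  simp [Real.log_mul (mehtaIntegral_pos hκ).ne' (pow_pos hΓ 3).ne']

lemma convexOn_log_prod_Gamma : ConvexOn ℝ (Ici 0) fun κ =>
    Real.log (Real.Gamma (1 + 2 * κ) * Real.Gamma (1 + 3 * κ) * Real.Gamma (1 + 4 * κ)) := by
  refine (((convexOn_log_Gamma_one_add_mul zero_le_two).add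
    (convexOn_log_Gamma_one_add_mul zero_le_three)).add
    (convexOn_log_Gamma_one_add_mul zero_le_four)).congr fun κ hκ => ?_
  have hΓ {a : ℝ} (ha : 0 ≤ a) : Real.Gamma (1 + a * κ) ≠ 0 :=
    (Real.Gamma_pos_of_pos (by have := mem_Ici.1 hκ; positivity)).ne'
  rw [Real.log_mul (mul_ne_zero (hΓ zero_le_two) (hΓ zero_le_three)) (hΓ zero_le_four),
    Real.log_mul (hΓ zero_le_two) (hΓ zero_le_three)]
  rfl

theorem mehtaIntegral_mul_Gamma_pow (hκ : 0 ≤ κ) :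
    mehtaIntegral κ * Real.Gamma (1 + κ) ^ 3 =
      Real.Gamma (1 + 2 * κ) * Real.Gamma (1 + 3 * κ) * Real.Gamma (1 + 4 * κ) := by
  have hΓ {x a : ℝ} (hx : 0 ≤ x) (ha : 0 ≤ a) : 0 < Real.Gamma (1 + a * x) :=
    Real.Gamma_pos_of_pos (by positivity)
  refine eqOn_of_log_convexOn_of_polynomial_recurrence convexOn_log_mehtaIntegral_mul_Gamma_pow
    convexOn_log_prod_Gamma (fun x hx => ?_) (fun x hx => ?_)
    (fun _ => mehtaIntegral_mul_Gamma_pow_add_one) (fun _ => prod_Gamma_add_one) ?_ hκ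
  · exact mul_pos (mehtaIntegral_pos hx) (pow_pos (Real.Gamma_pos_of_pos (by positivity)) 3)
  · exact mul_pos (mul_pos (hΓ hx zero_le_two) (hΓ hx zero_le_three)) (hΓ hx zero_le_four)
  · simp [mehtaIntegral_zero]

end D3

section DifferenceProduct

/-- The product of the positive roots of `A_{n-1}`, which is the Vandermonde determinant up to
sign. -/
def differenceProduct {n : ℕ} (x : Fin n → ℝ) : ℝ :=
  ∏ p ∈ Finset.univ.filter (fun p : Fin n × Fin n => p.1 < p.2), (x p.1 - x p.2)

lemma prod_abs_sub_rpow {n : ℕ} (x : Fin n → ℝ) (κ : ℝ) :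
    ∏ p ∈ Finset.univ.filter (fun p : Fin n × Fin n => p.1 < p.2), |x p.1 - x p.2| ^ (2 * κ) =
      (differenceProduct x ^ 2) ^ κ := by
  rw [Real.finsetProd_rpow _ _ fun _ _ => abs_nonneg _, ← Finset.abs_prod,
    Real.rpow_mul (abs_nonneg _), Real.rpow_two, sq_abs, differenceProduct]

lemma differenceProduct_fin_four (x : Fin 4 → ℝ) : differenceProduct x =
    (x 0 - x 1) * (x 0 - x 2) * (x 0 - x 3) * (x 1 - x 2) * (x 1 - x 3) * (x 2 - x 3) := by
  have hpairs : Finset.univ.filter (fun p : Fin 4 × Fin 4 => p.1 < p.2) =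
      {(0, 1), (0, 2), (0, 3), (1, 2), (1, 3), (2, 3)} := by decide
  rw [differenceProduct, hpairs]
  simp [mul_assoc]

lemma differenceProduct_smul {n : ℕ} (r : ℝ) (x : Fin n → ℝ) : differenceProduct (r • x) =
    r ^ (Finset.univ.filter fun p : Fin n × Fin n => p.1 < p.2).card * differenceProduct x := by
  simp only [differenceProduct, Pi.smul_apply, smul_eq_mul, ← mul_sub, Finset.prod_mul_distrib,
    Finset.prod_const]

lemma differenceProduct_sq_rpow_smul {r : ℝ} (hr : 0 ≤ r) (κ : ℝ) (x : Fin 4 → ℝ) :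
    (differenceProduct (r • x) ^ 2) ^ κ = r ^ (12 * κ) * (differenceProduct x ^ 2) ^ κ := by
  have hcard : (Finset.univ.filter fun p : Fin 4 × Fin 4 => p.1 < p.2).card = 6 := by decide
  rw [differenceProduct_smul, hcard, mul_pow, ← pow_mul, Real.mul_rpow (by positivity)
    (sq_nonneg _), ← Real.rpow_natCast_mul hr]
  norm_num

lemma measurable_differenceProduct {n : ℕ} : Measurable (differenceProduct (n := n)) := by
  unfold differenceProduct
  fun_prop

/-- The reflection of `ℝ⁴` carrying the root system `A₃`, spanned by the `e_i - e_j`, to `D₃`. -/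
noncomputable def rootReflection : EuclideanSpace ℝ (Fin 4) ≃ₗᵢ[ℝ] EuclideanSpace ℝ (Fin 4) :=
  (ℝ ∙ (!₂[1, -1, -1, -1] : EuclideanSpace ℝ (Fin 4)))ᗮ.reflection

lemma rootReflection_apply (x : EuclideanSpace ℝ (Fin 4)) : rootReflection x =
    x - ((x 0 - x 1 - x 2 - x 3) / 2) • !₂[1, -1, -1, -1] := by
  have hnorm : ‖(!₂[1, -1, -1, -1] : EuclideanSpace ℝ (Fin 4))‖ ^ 2 = 4 := by
    rw [EuclideanSpace.norm_sq_eq]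
    simp [Fin.sum_univ_four]
    norm_num
  have hinner : ⟪(!₂[1, -1, -1, -1] : EuclideanSpace ℝ (Fin 4)), x⟫ = x 0 - x 1 - x 2 - x 3 := by
    simp [PiLp.inner_apply, Fin.sum_univ_four]
    ring
  rw [rootReflection, Submodule.reflection_orthogonal_apply, Submodule.reflection_singleton_apply,
    RCLike.ofReal_real_eq_id, id_eq, hnorm, hinner]
  module

lemma differenceProduct_rootReflection_sq (x : EuclideanSpace ℝ (Fin 4)) :
    differenceProduct (rootReflection x).ofLp ^ 2 =
      MvPolynomial.eval x.ofLp D3.rootProduct ^ 2 := by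
  rw [rootReflection_apply, differenceProduct_fin_four]
  simp [D3.rootProduct]
  ring

theorem integral_differenceProduct_rpow_stdGaussian (κ : ℝ) :
    ∫ x, (differenceProduct x.ofLp ^ 2) ^ κ ∂stdGaussian (EuclideanSpace ℝ (Fin 4)) =
      D3.mehtaIntegral κ := by
  have hγ := isRotationInvariant_stdGaussian (E := EuclideanSpace ℝ (Fin 4)) rootReflection
  conv_lhs => rw [← hγ]
  refine (rootReflection.toHomeomorph.measurableEmbedding.integral_map _).trans ?_
  exact integral_congr_ae (.of_forall fun x =>
    congrArg (· ^ κ) (differenceProduct_rootReflection_sq x))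

theorem mehtaIntegral_eq_mul_integral_differenceProduct
    {ν : Measure (EuclideanSpace ℝ (Fin 4))} [IsProbabilityMeasure ν] (hν : IsRotationInvariant ν)
    (hν1 : ∀ᵐ x ∂ν, ‖x‖ = 1) {κ : ℝ} (hκ : 0 ≤ κ) :
    D3.mehtaIntegral κ =
      2 ^ (6 * κ) * Real.Gamma (2 + 6 * κ) * ∫ x, (differenceProduct x.ofLp ^ 2) ^ κ ∂ν := by
  have hmeas : Measurable fun x : EuclideanSpace ℝ (Fin 4) => (differenceProduct x.ofLp ^ 2) ^ κ :=
    ((measurable_differenceProduct.comp (by fun_prop)).pow_const 2).pow_const κ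
  have hdim : (finrank ℝ (EuclideanSpace ℝ (Fin 4)) : ℝ) = 4 := by simp
  rw [← integral_differenceProduct_rpow_stdGaussian, integral_stdGaussian_eq_mul_of_homogeneous hν
    hν1 hmeas (s := 12 * κ) (by linarith)
    (fun r x hr => differenceProduct_sq_rpow_smul hr κ x.ofLp), hdim]
  have hΓ : Real.Gamma (4 / 2) = 1 := by norm_num
  rw [hΓ, div_one]
  ring_nf

end DifferenceProduct

end MacdonaldMehta

/-- The Macdonald–Mehta–Selberg integral on the unit sphere of `ℝ⁴`: for the
    rotation-invariant probability measure `ω` on the sphere and `κ ≥ 0`,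
    `∫_S ∏_{1≤i<j≤4} |xᵢ − xⱼ|^{2κ} dω
      = 2^{−6κ} Γ(1+2κ)Γ(1+3κ)Γ(1+4κ)/(Γ(2+6κ)Γ(1+κ)³)`. -/
theorem macdonald_mehta_selberg_sphere
    (ω : Measure (Metric.sphere (0 : EuclideanSpace ℝ (Fin 4)) 1))
    [IsProbabilityMeasure ω]
    (hinv : ∀ R : EuclideanSpace ℝ (Fin 4) ≃ₗᵢ[ℝ] EuclideanSpace ℝ (Fin 4),
      Measure.map (fun x : Metric.sphere (0 : EuclideanSpace ℝ (Fin 4)) 1 =>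
        (⟨R x.1, mem_sphere_zero_iff_norm.mpr
          (by rw [R.norm_map]; exact mem_sphere_zero_iff_norm.mp x.2)⟩ :
            Metric.sphere (0 : EuclideanSpace ℝ (Fin 4)) 1)) ω = ω)
    (κ : ℝ) (hκ : 0 ≤ κ) :
    ∫ x : Metric.sphere (0 : EuclideanSpace ℝ (Fin 4)) 1,
        ∏ p ∈ Finset.univ.filter (fun p : Fin 4 × Fin 4 => p.1 < p.2),
          |(x : EuclideanSpace ℝ (Fin 4)) p.1 - (x : EuclideanSpace ℝ (Fin 4)) p.2|
            ^ (2 * κ) ∂ω =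
      ((2:ℝ) ^ (6 * κ))⁻¹ *
          (Real.Gamma (1 + 2 * κ) * Real.Gamma (1 + 3 * κ) * Real.Gamma (1 + 4 * κ)) /
        (Real.Gamma (2 + 6 * κ) * Real.Gamma (1 + κ) ^ 3) := by
  set ν : Measure (EuclideanSpace ℝ (Fin 4)) := ω.map Subtype.val
  have : IsProbabilityMeasure ν :=
    Measure.isProbabilityMeasure_map measurable_subtype_coe.aemeasurable
  have hν1 : ∀ᵐ x ∂ν, ‖x‖ = 1 := by
    refine (ae_map_iff measurable_subtype_coe.aemeasurable
      (measurableSet_eq_fun measurable_norm measurable_const)).2 (.of_forall fun x => ?_)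
    exact mem_sphere_zero_iff_norm.1 x.2
  have hpolar := MacdonaldMehta.mehtaIntegral_eq_mul_integral_differenceProduct
    (MacdonaldMehta.isRotationInvariant_map_subtypeVal hinv) hν1 hκ
  have hgauss := MacdonaldMehta.D3.mehtaIntegral_mul_Gamma_pow hκ
  rw [(MeasurableEmbedding.subtype_coe Metric.isClosed_sphere.measurableSet).integral_map] at hpolar
  simp only [MacdonaldMehta.prod_abs_sub_rpow]
  have hΓ₁ : 0 < Real.Gamma (1 + κ) := Real.Gamma_pos_of_pos (by positivity)
  have hΓ₂ : 0 < Real.Gamma (2 + 6 * κ) := Real.Gamma_pos_of_pos (by positivity)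
  rw [← hgauss, hpolar]
  field_simp [hΓ₁.ne', hΓ₂.ne']
end
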